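/- arXiv:math/9605215 — 5 statements merged into one kernel-verified Lean document; each statement's English description precedes it below -/
import Mathlib

section
/- Let X be a separable, nonreflexive real Banach space. Then there exists a function f : X → ℝ such that: (a) f is continuous from X equipped with its weak topology to ℝ; (b) f is bounded on every norm-bounded subset of X; and (c) f is not weakly uniformly continuous on the closed unit ball B_X of X. -/
/-!
Nonreflexivity gives a bidual element `F` of norm at most one that is not evaluation at any point
of `X`. The norm-open sets `{x | φ x ≠ F φ}`, for `φ ∈ X*`, cover `X`, and `X` is Lindelöf because
it is separable, so countably many functionals `φ₀, φ₁, …` already distinguish `F` from every point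
of `X` (`exists_seq_separating_bidual`). The gap

  `g x = ∑ 2⁻ⁿ min 1 |φₙ x - F φₙ|`

is therefore weakly continuous and strictly positive on `X`, and `f = sin (1 / g)` is weakly
continuous and bounded.

By Goldstine's theorem (`exists_filter_goldstine`) some filter on the closed unit ball converges
weak-* to `F`, and `g` tends to `0` along it. Given finitely many functionals and `δ > 0`, the points
of the ball that are `δ / 2`-close to `F` on these functionals form a convex set belonging to the
filter. On this connected set `g` takes every small positive value, so `f` takes both values `1` and
`-1` there, although any two of its points are `δ`-close on the given functionals.
-/

open Filter Topology

/-- The weak topology `σ(X, X*)` on a topological vector space: the topology of pointwise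
convergence against all continuous linear functionals. -/
def weakTopology (X : Type*) [AddCommGroup X] [Module ℝ X] [TopologicalSpace X] :
    TopologicalSpace X :=
  TopologicalSpace.induced (fun x (φ : X →L[ℝ] ℝ) => φ x) Pi.topologicalSpace

/-- A function `f : X → ℝ` is weakly uniformly continuous on `B ⊆ X` if for every `ε > 0`
there exist finitely many functionals `φ₁, …, φ_n ∈ X*` and `δ > 0` such that
`|f x − f y| < ε` whenever `x, y ∈ B` satisfy `|φ_i (x − y)| < δ` for all `i`. -/
def WeaklyUnifContOn {X : Type*} [NormedAddCommGroup X] [NormedSpace ℝ X]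
    (f : X → ℝ) (B : Set X) : Prop :=
  ∀ ε > (0 : ℝ), ∃ (n : ℕ) (φ : Fin n → X →L[ℝ] ℝ) (δ : ℝ), 0 < δ ∧
    ∀ x ∈ B, ∀ y ∈ B, (∀ i, |φ i (x - y)| < δ) → |f x - f y| < ε

/-- Hahn–Banach for the weak topology of a bilinear pairing, phrased in the product space `V → ℝ`:
a point that no element of `V` strictly separates from a convex set lies in its weak closure. -/
theorem mem_closure_of_not_separated {E V : Type*} [AddCommGroup E] [Module ℝ E]
    [AddCommGroup V] [Module ℝ V] (B : E →ₗ[ℝ] V →ₗ[ℝ] ℝ) {s : Set E} (hs : Convex ℝ s) (p : E)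
    (h : ∀ (ψ : V) (u : ℝ), (∀ a ∈ s, B a ψ < u) → B p ψ ≤ u) :
    (fun ψ => B p ψ) ∈ closure ((fun a ψ => B a ψ) '' s) := by
  let s' : Set (WeakBilin B) := s
  let p' : WeakBilin B := p
  have hs' : Convex ℝ s' := hs
  have hmem : p' ∈ closure s' := by
    by_contra hp
    obtain ⟨A, u, hA, hu⟩ := geometric_hahn_banach_closed_point hs'.closure isClosed_closure hp
    -- Weakly continuous functionals on `E` are the pairings with elements of `V`.
    obtain ⟨ψ, rfl⟩ := LinearMap.dualEmbedding_surjective B A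
    exact (h ψ u fun a ha => hA a (subset_closure ha)).not_gt hu
  exact image_closure_subset_closure_image (WeakBilin.coeFn_continuous B) ⟨p', hmem, rfl⟩

/-- **Goldstine's theorem**, in filter form: the closed unit ball of `X` is weak-* dense in the
closed unit ball of the bidual. -/
theorem exists_filter_goldstine {X : Type*} [NormedAddCommGroup X] [NormedSpace ℝ X]
    (F : StrongDual ℝ (StrongDual ℝ X)) (hF : ‖F‖ ≤ 1) :
    ∃ l : Filter X, l.NeBot ∧ Metric.closedBall (0 : X) 1 ∈ l ∧
      Tendsto (fun x (φ : X →L[ℝ] ℝ) => φ x) l (𝓝 fun φ => F φ) := by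
  let J : X →ₗ[ℝ] StrongDual ℝ (StrongDual ℝ X) :=
    (NormedSpace.inclusionInDoubleDual ℝ X).toLinearMap
  have hmem := mem_closure_of_not_separated (topDualPairing ℝ (StrongDual ℝ X))
    ((convex_closedBall (0 : X) 1).linear_image J) F fun ψ u hψu => by
      have hlt : ∀ x : X, ‖x‖ ≤ 1 → ψ x < u := fun x hx =>
        hψu (J x) ⟨x, by simpa using hx, rfl⟩
      have h0 : 0 < u := by simpa using hlt 0 (by simp)
      have hψ : ‖ψ‖ ≤ u := by
        refine ContinuousLinearMap.opNorm_le_of_unit_norm h0.le fun x hx => ?_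
        rw [Real.norm_eq_abs, abs_le]
        have h1 := hlt x hx.le
        have h2 := hlt (-x) (by simp [hx])
        rw [map_neg] at h2
        constructor <;> linarith
      have h3 : F ψ ≤ ‖ψ‖ :=
        (le_abs_self _).trans ((F.le_opNorm ψ).trans (mul_le_of_le_one_left (norm_nonneg _) hF))
      exact h3.trans hψ
  rw [Set.image_image] at hmem
  let T : X → (X →L[ℝ] ℝ) → ℝ := fun x φ => φ x
  have hcl : ClusterPt (fun φ => F φ) (𝓟 (T '' Metric.closedBall 0 1)) :=
    mem_closure_iff_clusterPt.1 hmem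
  refine ⟨𝓟 (Metric.closedBall 0 1) ⊓ comap T (𝓝 fun φ => F φ), ?_,
    mem_inf_of_left (mem_principal_self _), tendsto_comap.mono_left inf_le_right⟩
  rw [ClusterPt, ← map_principal, inf_comm, ← Filter.push_pull] at hcl
  exact hcl.of_map

/-- A bidual element outside `X` is distinguished from all points of a separable `X` by countably
many functionals. -/
theorem exists_seq_separating_bidual {X : Type*} [NormedAddCommGroup X] [NormedSpace ℝ X]
    [TopologicalSpace.SeparableSpace X] (F : StrongDual ℝ (StrongDual ℝ X))
    (hF : F ∉ Set.range (NormedSpace.inclusionInDoubleDual ℝ X)) :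
    ∃ φ : ℕ → (X →L[ℝ] ℝ), ∀ x, ∃ n, φ n x ≠ F (φ n) := by
  have hex : ∀ x : X, ∃ φ : X →L[ℝ] ℝ, φ x ≠ F φ := by
    intro x
    by_contra! h
    exact hF ⟨x, ContinuousLinearMap.ext h⟩
  choose ψ hψ using hex
  have : SecondCountableTopology X := UniformSpace.secondCountable_of_separable X
  obtain ⟨s, hs, hcov⟩ := TopologicalSpace.countable_cover_nhds
    (f := fun x => {y | ψ x y ≠ F (ψ x)})
    fun x => (isOpen_ne_fun (ψ x).continuous continuous_const).mem_nhds (hψ x)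
  have hne : s.Nonempty := by
    obtain ⟨i, hi, -⟩ := Set.mem_iUnion₂.1 (hcov.symm ▸ Set.mem_univ (0 : X))
    exact ⟨i, hi⟩
  obtain ⟨e, rfl⟩ := hs.exists_eq_range hne
  refine ⟨fun n => ψ (e n), fun x => ?_⟩
  obtain ⟨_, ⟨n, rfl⟩, h⟩ := Set.mem_iUnion₂.1 (hcov.symm ▸ Set.mem_univ x)
  exact ⟨n, h⟩

/-- The gap between `z` and `w`, two real functions on an index set `ι`, along a sequence `φ` of
indices. For `ι` the dual of `X` and `w` a bidual element, its restriction to `X` is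
`x ↦ ∑ 2⁻ⁿ min 1 |φₙ x - w φₙ|`. -/
noncomputable def weightedGap {ι : Type*} (φ : ℕ → ι) (w z : ι → ℝ) : ℝ :=
  ∑' n, (1 / 2 : ℝ) ^ n * min 1 |z (φ n) - w (φ n)|

theorem weightedGap_term_le {ι : Type*} (φ : ℕ → ι) (w z : ι → ℝ) (n : ℕ) :
    ‖(1 / 2 : ℝ) ^ n * min 1 |z (φ n) - w (φ n)|‖ ≤ (1 / 2 : ℝ) ^ n := by
  rw [Real.norm_of_nonneg (by positivity)]
  exact mul_le_of_le_one_right (by positivity) (min_le_left _ _)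

theorem continuous_weightedGap {ι : Type*} (φ : ℕ → ι) (w : ι → ℝ) :
    Continuous (weightedGap φ w) :=
  continuous_tsum (fun _ => by fun_prop) summable_geometric_two
    fun n z => weightedGap_term_le φ w z n

theorem weightedGap_self {ι : Type*} (φ : ℕ → ι) (w : ι → ℝ) : weightedGap φ w w = 0 := by
  simp [weightedGap]

theorem weightedGap_pos {ι : Type*} {φ : ℕ → ι} {w z : ι → ℝ} (h : ∃ n, z (φ n) ≠ w (φ n)) :
    0 < weightedGap φ w z := by
  obtain ⟨n, hn⟩ := h
  refine (Summable.of_norm_bounded summable_geometric_two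
    (weightedGap_term_le φ w z)).tsum_pos (fun _ => by positivity) n ?_
  have := abs_pos.2 (sub_ne_zero.2 hn)
  positivity

theorem continuous_sin_inv {Y : Type*} [TopologicalSpace Y] {g : Y → ℝ} (hg : Continuous g)
    (hpos : ∀ y, 0 < g y) : Continuous fun y => Real.sin (g y)⁻¹ :=
  Real.continuous_sin.comp (hg.inv₀ fun y => (hpos y).ne')

/-- On a separable, nonreflexive real Banach space there is a real-valued function which is
weakly continuous on the whole space and bounded on bounded sets, but not weakly uniformly
continuous on the closed unit ball. -/
theorem exists_weaklyContinuous_bounded_not_weaklyUnifCont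
    (X : Type*) [NormedAddCommGroup X] [NormedSpace ℝ X] [CompleteSpace X]
    [TopologicalSpace.SeparableSpace X]
    (hnonrefl : ¬ Function.Surjective (NormedSpace.inclusionInDoubleDual ℝ X)) :
    ∃ f : X → ℝ,
      (@Continuous X ℝ (weakTopology X) inferInstance f) ∧
      (∀ B : Set X, Bornology.IsBounded B → ∃ C : ℝ, ∀ x ∈ B, |f x| ≤ C) ∧
      ¬ WeaklyUnifContOn f (Metric.closedBall (0 : X) 1) := by
  obtain ⟨F, hF1, hF⟩ : ∃ F : StrongDual ℝ (StrongDual ℝ X), ‖F‖ ≤ 1 ∧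
      F ∉ Set.range (NormedSpace.inclusionInDoubleDual ℝ X) := by
    obtain ⟨F₀, hF₀⟩ := not_forall.1 hnonrefl
    have hne : F₀ ≠ 0 := fun h => hF₀ ⟨0, by simp [h]⟩
    have hn : ‖F₀‖ ≠ 0 := fun h => hne ((ContinuousLinearMap.opNorm_zero_iff F₀).1 h)
    refine ⟨‖F₀‖⁻¹ • F₀, (ContinuousLinearMap.opNorm_smul_le _ F₀).trans ?_, ?_⟩
    · rw [norm_inv, Real.norm_of_nonneg F₀.opNorm_nonneg, inv_mul_cancel₀ hn]
    rintro ⟨x, hx⟩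
    exact hF₀ ⟨‖F₀‖ • x, by rw [map_smul, hx, smul_smul, mul_inv_cancel₀ hn, one_smul]⟩
  obtain ⟨φ, hφ⟩ := exists_seq_separating_bidual F hF
  obtain ⟨l, hl, hball, hlim⟩ := exists_filter_goldstine F hF1
  let T : X → (X →L[ℝ] ℝ) → ℝ := fun x ψ => ψ x
  let g : X → ℝ := fun x => weightedGap φ (fun ψ => F ψ) (T x)
  have hgpos : ∀ x, 0 < g x := fun x => weightedGap_pos (hφ x)
  have hgcont : Continuous g := (continuous_weightedGap _ _).comp (by fun_prop)
  have hgweak : @Continuous X ℝ (weakTopology X) inferInstance g :=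
    @Continuous.comp _ _ _ (weakTopology X) _ _ _ _ (continuous_weightedGap _ _)
      continuous_induced_dom
  have hglim : Tendsto g l (𝓝 0) := by
    have h := ((continuous_weightedGap φ (fun ψ => F ψ)).tendsto (fun ψ => F ψ)).comp hlim
    rwa [weightedGap_self] at h
  refine ⟨fun x => Real.sin (g x)⁻¹, ?_, fun B _ => ⟨1, fun x _ => Real.abs_sin_le_one _⟩, ?_⟩
  · exact @continuous_sin_inv X (weakTopology X) g hgweak hgpos
  intro hunif
  obtain ⟨n, ψ, δ, hδ, h⟩ := hunif 1 one_pos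
  let C : Set X := Metric.closedBall 0 1 ∩ ⋂ i, ψ i ⁻¹' Metric.ball (F (ψ i)) (δ / 2)
  have hCconv : Convex ℝ C := (convex_closedBall _ _).inter <| convex_iInter fun i =>
    (convex_ball _ _).linear_preimage (ψ i).toLinearMap
  have hCl : C ∈ l := by
    refine inter_mem hball (iInter_mem.2 fun i => ?_)
    exact tendsto_pi_nhds.1 hlim (ψ i) (Metric.ball_mem_nhds _ (half_pos hδ))
  -- The gap attains on `C` every sufficiently small positive value.
  obtain ⟨x₀, hx₀⟩ := hl.nonempty_of_mem hCl
  have hvals : ∀ t, (g x₀)⁻¹ ≤ t → ∃ x ∈ C, (g x)⁻¹ = t := by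
    intro t ht
    have ht0 : 0 < t := (inv_pos.2 (hgpos x₀)).trans_le ht
    obtain ⟨x₁, hx₁, hx₁C⟩ :=
      ((hglim.eventually (gt_mem_nhds (inv_pos.2 ht0))).and hCl).exists
    obtain ⟨x, hxC, hx⟩ := hCconv.isPreconnected.intermediate_value hx₁C hx₀
      hgcont.continuousOn ⟨hx₁.le, inv_le_of_inv_le₀ (hgpos x₀) ht⟩
    exact ⟨x, hxC, by rw [hx, inv_inv]⟩
  obtain ⟨k, hk⟩ := exists_nat_ge (g x₀)⁻¹
  have hkt : (g x₀)⁻¹ ≤ Real.pi / 2 + k * (2 * Real.pi) := by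
    nlinarith [Real.pi_gt_three, (Nat.cast_nonneg k : (0 : ℝ) ≤ k)]
  obtain ⟨x, hxC, hx⟩ := hvals _ hkt
  obtain ⟨y, hyC, hy⟩ := hvals (Real.pi / 2 + k * (2 * Real.pi) + Real.pi)
    (by linarith [Real.pi_pos])
  have hfar := h x hxC.1 y hyC.1 fun i => by
    have h1 := Set.mem_iInter.1 hxC.2 i
    have h2 := Set.mem_iInter.1 hyC.2 i
    rw [map_sub, ← Real.dist_eq]
    exact (dist_triangle_right _ _ (F (ψ i))).trans_lt (by
      have h1' : dist (ψ i x) (F (ψ i)) < δ / 2 := h1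
      have h2' : dist (ψ i y) (F (ψ i)) < δ / 2 := h2
      linarith)
  simp only [hx, hy, Real.sin_add_pi, Real.sin_add_nat_mul_two_pi, Real.sin_pi_div_two] at hfar
  norm_num at hfar
end

section
/- Let X₁,…,X_k, Y be Banach spaces and let 1 ≤ i ≤ k−1. Let ξ_i be the canonical currying isometry from 𝓛(X₁,…,X_k;Y) onto 𝓛(X₁,…,X_i; 𝓛(X_{i+1},…,X_k;Y)), given by ξ_i(A)(x₁,…,x_i)(x_{i+1},…,x_k) = A(x₁,…,x_k). Then a continuous k-linear mapping A : X₁ × ⋯ × X_k → Y is weakly continuous on bounded sets if and only if ξ_i(A) takes its values in 𝓛_{wb}(X_{i+1},…,X_k;Y) and, as a mapping from X₁ × ⋯ × X_i into the normed space 𝓛_{wb}(X_{i+1},…,X_k;Y), is itself weakly continuous on bounded sets. In other words, ξ_i maps 𝓛_{wb}(X₁,…,X_k;Y) onto 𝓛_{wb}(X₁,…,X_i; 𝓛_{wb}(X_{i+1},…,X_k;Y)). -/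
/-!
The implication from right to left is the estimate
`‖Ā x_α z_α - Ā x z_α‖ ≤ ‖Ā x_α - Ā x‖ ∏ ‖z_α‖` together with weak continuity of `Ā x`.

For the converse, the point is that weak continuity of `A` on bounded sets is automatically uniform
in the variables that are merely bounded: if `x_α → x` weakly and `(z_α)` is bounded, then
`A (x_α, z_α) - A (x, z_α) → 0` (`tendsto_sub_piecewise`). Choosing `z_α` in the unit ball that almost
attains the norm of `Ā x_α - Ā x` then gives norm convergence of `Ā x_α`.

The uniformity is proved by induction on the set `S` of merely bounded variables. To add a variable
`s` to `S`, pass to an ultrafilter `U`; bounded scalar functions converge along `U`, so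
`z_α - z_β → 0` weakly along `U ×ˢ U`. Write `z_α = z_β + (z_α - z_β)` in the `s`-th variable. The terms
with `z_α - z_β` tend to `0` along `U ×ˢ U` by the induction hypothesis, and once a good `β` is fixed,
the terms with the constant `z_β` are controlled by the induction hypothesis along `U`.
-/

open Filter Topology

universe u

/-- A mapping `A` (e.g. a `k`-linear map) from a product of Banach spaces into a normed space
is weakly continuous on bounded sets if for all norm-bounded nets `(x^l_α)` converging weakly
to `x^l`, the net `A (x¹_α, …, x^k_α)` converges in norm to `A (x¹, …, x^k)`. -/
def WeaklyContOnBounded {k : ℕ} {X : Fin k → Type u} {Y : Type u}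
    [∀ l, NormedAddCommGroup (X l)] [∀ l, NormedSpace ℝ (X l)]
    [SeminormedAddCommGroup Y]
    (A : (∀ l, X l) → Y) : Prop :=
  ∀ (Γ : Type u) [Preorder Γ] [IsDirected Γ (· ≤ ·)] [Nonempty Γ],
    ∀ (x : ∀ l, Γ → X l) (L : ∀ l, X l),
      (∀ l, ∃ C : ℝ, ∀ α, ‖x l α‖ ≤ C) →
      (∀ l (φ : X l →L[ℝ] ℝ), Tendsto (fun α => φ (x l α)) atTop (𝓝 (φ (L l)))) →
      Tendsto (fun α => A fun l => x l α) atTop (𝓝 (A L))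

/-- Filters can replace nets: convergence along an arbitrary filter is tested on the net indexed
by pairs `(t, a)` with `a ∈ t ∈ F`, ordered by reverse inclusion of the sets. -/
theorem WeaklyContOnBounded.tendsto_of_filter {k : ℕ} {X : Fin k → Type u} {Y : Type u}
    [∀ l, NormedAddCommGroup (X l)] [∀ l, NormedSpace ℝ (X l)] [SeminormedAddCommGroup Y]
    {A : (∀ l, X l) → Y} (hA : WeaklyContOnBounded A)
    {ι : Type u} (F : Filter ι) (v : ι → ∀ l, X l) (L : ∀ l, X l)
    (hb : ∀ l, ∃ C : ℝ, ∀ a, ‖v a l‖ ≤ C)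
    (hv : ∀ l (φ : X l →L[ℝ] ℝ), Tendsto (fun a => φ (v a l)) F (𝓝 (φ (L l)))) :
    Tendsto (fun a => A (v a)) F (𝓝 (A L)) := by
  rcases F.eq_or_neBot with rfl | hF
  · exact tendsto_bot
  let Γ : Type u := {p : Set ι × ι // p.1 ∈ F ∧ p.2 ∈ p.1}
  let _ : Preorder Γ := Preorder.lift (fun p : Γ => OrderDual.toDual p.1.1)
  have le_def : ∀ p q : Γ, p ≤ q ↔ q.1.1 ⊆ p.1.1 := fun p q => Iff.rfl
  have mk : ∀ t ∈ F, ∃ p : Γ, p.1.1 = t := by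
    intro t ht
    obtain ⟨a, ha⟩ := hF.nonempty_of_mem ht
    exact ⟨⟨(t, a), ht, ha⟩, rfl⟩
  have : Nonempty Γ := (mk Set.univ univ_mem).nonempty
  have : IsDirected Γ (· ≤ ·) := ⟨fun p q => by
    obtain ⟨r, hr⟩ := mk (p.1.1 ∩ q.1.1) (inter_mem p.2.1 q.2.1)
    refine ⟨r, ?_, ?_⟩
    · rw [le_def, hr]; exact Set.inter_subset_left
    · rw [le_def, hr]; exact Set.inter_subset_right⟩
  have hπ : Tendsto (fun p : Γ => p.1.2) atTop F := by
    intro t ht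
    obtain ⟨p, hp⟩ := mk t ht
    rw [mem_map]
    filter_upwards [eventually_ge_atTop p] with q hq
    exact hp ▸ (le_def p q).1 hq q.2.2
  have key := hA Γ (fun l p => v p.1.2 l) L
    (fun l => (hb l).imp fun C hC p => hC _) (fun l φ => (hv l φ).comp hπ)
  intro W hW
  obtain ⟨p, hp⟩ := mem_atTop_sets.1 (key hW)
  refine mem_map.2 (mem_of_superset p.2.1 fun a ha => ?_)
  exact hp ⟨(p.1.1, a), p.2.1, ha⟩ ((le_def _ _).2 subset_rfl)

/-- A bounded family is weakly Cauchy along every ultrafilter. -/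
theorem tendsto_weak_sub_ultrafilter {ι E : Type*} [NormedAddCommGroup E] [NormedSpace ℝ E]
    (U : Ultrafilter ι) (z : ι → E) (hz : ∃ C : ℝ, ∀ a, ‖z a‖ ≤ C) (φ : E →L[ℝ] ℝ) :
    Tendsto (fun p : ι × ι => φ (z p.1 - z p.2)) ((U : Filter ι) ×ˢ (U : Filter ι)) (𝓝 0) := by
  obtain ⟨C, hC⟩ := hz
  have hcpt : IsCompact (Metric.closedBall (0 : ℝ) (‖φ‖ * C)) := isCompact_closedBall _ _
  obtain ⟨c, -, hc⟩ := hcpt.ultrafilter_le_nhds (U.map fun a => φ (z a)) (by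
    rw [le_principal_iff]
    refine mem_map.2 (univ_mem' fun a => ?_)
    simp only [Set.mem_preimage, mem_closedBall_zero_iff]
    exact (φ.le_opNorm _).trans (by gcongr; exact hC a))
  have hc' : Tendsto (fun a => φ (z a)) U (𝓝 c) := hc
  simpa using (hc'.comp tendsto_fst).sub (hc'.comp tendsto_snd)

/-- Weak continuity on bounded sets is uniform in the merely bounded variables: if the variables
outside `S` converge weakly to those of `L` and the ones in `S` stay bounded, then replacing the
former by their limits changes the value of `A` by an amount tending to `0`. -/
theorem tendsto_sub_piecewise {k : ℕ} {X : Fin k → Type u} {Y : Type u}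
    [∀ l, NormedAddCommGroup (X l)] [∀ l, NormedSpace ℝ (X l)]
    [NormedAddCommGroup Y] [NormedSpace ℝ Y]
    (A : ContinuousMultilinearMap ℝ X Y) (hA : WeaklyContOnBounded (fun v => A v))
    (S : Finset (Fin k)) :
    ∀ {ι : Type u} (F : Filter ι) (v : ι → ∀ l, X l) (L : ∀ l, X l),
      (∀ l, ∃ C : ℝ, ∀ a, ‖v a l‖ ≤ C) →
      (∀ l, l ∉ S → ∀ φ : X l →L[ℝ] ℝ, Tendsto (fun a => φ (v a l)) F (𝓝 (φ (L l)))) →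
      Tendsto (fun a => A (v a) - A (S.piecewise (v a) L)) F (𝓝 0) := by
  induction S using Finset.induction_on with
  | empty =>
    intro ι F v L hb hv
    have := hA.tendsto_of_filter F v L hb fun l => hv l (Finset.notMem_empty l)
    simpa using this.sub_const (A L)
  | insert s S hs ih =>
    intro ι F v L hb hv
    rw [tendsto_iff_ultrafilter]
    intro U hUF
    have hvU : ∀ l, l ∉ insert s S → ∀ φ : X l →L[ℝ] ℝ,
        Tendsto (fun a => φ (v a l)) U (𝓝 (φ (L l))) := fun l hl φ => (hv l hl φ).mono_left hUF
    -- The induction hypothesis for a family whose `s`-th variable tends weakly to `0`: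
    -- the term with the limit inserted vanishes.
    have small : ∀ w : ι → ∀ l, X l, (∀ l, ∃ C : ℝ, ∀ a, ‖w a l‖ ≤ C) →
        (∀ l, l ∉ insert s S → ∀ φ : X l →L[ℝ] ℝ,
          Tendsto (fun a => φ (w a l)) U (𝓝 (φ (L l)))) →
        Tendsto (fun p : ι × ι => A (Function.update (w p.1) s (w p.1 s - w p.2 s)))
          ((U : Filter ι) ×ˢ (U : Filter ι)) (𝓝 0) := by
      intro w hbw hw
      have h := ih ((U : Filter ι) ×ˢ (U : Filter ι))
        (fun p : ι × ι => Function.update (w p.1) s (w p.1 s - w p.2 s)) (Function.update L s 0)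
        (fun l => by
          by_cases hl : l = s
          · subst hl
            obtain ⟨C, hC⟩ := hbw l
            refine ⟨C + C, fun p => ?_⟩
            rw [Function.update_self]
            exact (norm_sub_le _ _).trans (add_le_add (hC _) (hC _))
          · obtain ⟨C, hC⟩ := hbw l
            exact ⟨C, fun p => by rw [Function.update_of_ne hl]; exact hC _⟩)
        (fun l hl φ => by
          by_cases hls : l = s
          · subst hls
            simpa using tendsto_weak_sub_ultrafilter U (fun a => w a l) (hbw l) φ
          · simp only [Function.update_of_ne hls]
            exact (hw l (by simp [hls, hl]) φ).comp tendsto_fst)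
      refine h.congr fun p => ?_
      rw [A.map_coord_zero (m := S.piecewise _ _) s (by simp [hs]), sub_zero]
    set w : ι → ∀ l, X l := fun a => (insert s S).piecewise (v a) L with hw_def
    have hws : ∀ a, w a s = v a s := fun a => by simp [hw_def]
    have hbw : ∀ l, ∃ C : ℝ, ∀ a, ‖w a l‖ ≤ C := by
      intro l
      by_cases hl : l ∈ insert s S
      · obtain ⟨C, hC⟩ := hb l
        exact ⟨C, fun a => by simpa only [hw_def, Finset.piecewise_eq_of_mem _ _ _ hl] using hC a⟩
      · exact ⟨‖L l‖, fun a => by simp only [hw_def, Finset.piecewise_eq_of_notMem _ _ _ hl]; rfl⟩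
    have hww : ∀ l, l ∉ insert s S → ∀ φ : X l →L[ℝ] ℝ,
        Tendsto (fun a => φ (w a l)) U (𝓝 (φ (L l))) := by
      intro l hl φ
      simp only [hw_def, Finset.piecewise_eq_of_notMem _ _ _ hl]
      exact tendsto_const_nhds
    have hD2 := (small v hb hvU).sub (small w hbw hww)
    rw [sub_zero] at hD2
    -- With the index `b` fixed, the `s`-th variable is constant.
    have hD1 : ∀ b : ι, Tendsto (fun a => A (Function.update (v a) s (v b s)) -
        A (Function.update (w a) s (v b s))) U (𝓝 0) := by
      intro b
      have h := ih (U : Filter ι) (fun a => Function.update (v a) s (v b s))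
        (Function.update L s (v b s))
        (fun l => by
          by_cases hl : l = s
          · subst hl
            exact ⟨‖v b l‖, fun a => by rw [Function.update_self]⟩
          · obtain ⟨C, hC⟩ := hb l
            exact ⟨C, fun p => by rw [Function.update_of_ne hl]; exact hC _⟩)
        (fun l hl φ => by
          by_cases hls : l = s
          · subst hls
            simp
          · simp only [Function.update_of_ne hls]
            exact hvU l (by simp [hls, hl]) φ)
      refine h.congr fun a => ?_
      congr 2
      ext l
      by_cases hls : l = s
      · subst hls
        simp [hs]
      · by_cases hl : l ∈ S <;> simp [hw_def, hls, hl, Finset.piecewise]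
    have split : ∀ (u : ι → ∀ l, X l) (a b : ι), A (u a) =
        A (Function.update (u a) s (u b s)) +
          A (Function.update (u a) s (u a s - u b s)) := by
      intro u a b
      rw [← A.map_update_add, add_sub_cancel, Function.update_eq_self]
    rw [Metric.tendsto_nhds] at hD2 ⊢
    intro ε hε
    obtain ⟨b, hb2⟩ := (eventually_swap_iff.1 (hD2 (ε / 2) (half_pos hε))).curry.exists
    filter_upwards [hb2, Metric.tendsto_nhds.1 (hD1 b) (ε / 2) (half_pos hε)] with a h2 h1
    rw [dist_zero_right] at h1 h2 ⊢
    have e : A (v a) - A (w a) =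
        (A (Function.update (v a) s (v b s)) - A (Function.update (w a) s (v b s))) +
        (A (Function.update (v a) s (v a s - v b s)) -
          A (Function.update (w a) s (w a s - w b s))) := by
      rw [split v a b, split w a b, hws b]
      abel
    rw [e]
    exact (norm_add_le _ _).trans_lt ((add_lt_add h1 h2).trans_eq (add_halves ε))

theorem exists_unit_half_opNorm_le {n : ℕ} {E : Fin n → Type*} {Y : Type*}
    [∀ l, NormedAddCommGroup (E l)] [∀ l, NormedSpace ℝ (E l)]
    [NormedAddCommGroup Y] [NormedSpace ℝ Y] (T : ContinuousMultilinearMap ℝ E Y) :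
    ∃ z : ∀ l, E l, (∀ l, ‖z l‖ ≤ 1) ∧ ‖T‖ ≤ 2 * ‖T z‖ := by
  by_contra! H
  have hpos : 0 < ‖T‖ := by
    have := H 0 (by simp)
    exact lt_of_le_of_lt (by positivity) this
  have hle : ‖T‖ ≤ ‖T‖ / 2 := by
    refine T.opNorm_le_bound (by positivity) fun m => ?_
    -- `‖m l‖⁻¹ • m l` lies in the unit ball even when `m l = 0`.
    have h1 := H (fun l => ‖m l‖⁻¹ • m l) fun l => by
      rw [norm_smul, norm_inv, norm_norm]
      exact inv_mul_le_one
    have hm : m = fun l => ‖m l‖ • (‖m l‖⁻¹ • m l) := by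
      ext l
      by_cases h : m l = 0
      · simp [h]
      · rw [smul_inv_smul₀ (norm_ne_zero_iff.2 h)]
    have h2 : T m = (∏ l, ‖m l‖) • T (fun l => ‖m l‖⁻¹ • m l) := by
      conv_lhs => rw [hm]
      exact T.map_smul_univ _ _
    have hp : 0 ≤ ∏ l, ‖m l‖ := Finset.prod_nonneg fun l _ => norm_nonneg _
    rw [h2, norm_smul, Real.norm_of_nonneg hp, mul_comm]
    gcongr
    linarith
  linarith

/-- Proposition (González–Gutiérrez). Let `ξ_i` be the canonical currying isometry, sending a
continuous `(i+j)`-linear map `A` to `Ā` with `Ā (x₁,…,x_i) (x_{i+1},…,x_{i+j}) = A (x₁,…,x_{i+j})`.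
Then `A` is weakly continuous on bounded sets iff `Ā` takes its values in
`𝓛_{wb} (X_{i+1},…,X_{i+j}; Y)` and is itself weakly continuous on bounded sets as a map into
that normed space; i.e. `ξ_i` maps `𝓛_{wb} (X₁,…,X_{i+j}; Y)` onto
`𝓛_{wb} (X₁,…,X_i; 𝓛_{wb} (X_{i+1},…,X_{i+j}; Y))`. -/
theorem weaklyContOnBounded_iff_curry {i j : ℕ} (hi : 1 ≤ i) (hj : 1 ≤ j)
    {X : Fin (i + j) → Type u} {Y : Type u}
    [∀ l, NormedAddCommGroup (X l)] [∀ l, NormedSpace ℝ (X l)] [∀ l, CompleteSpace (X l)]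
    [NormedAddCommGroup Y] [NormedSpace ℝ Y] [CompleteSpace Y]
    (A : ContinuousMultilinearMap ℝ X Y)
    (Abar : ContinuousMultilinearMap ℝ (fun l : Fin i => X (Fin.castAdd j l))
      (ContinuousMultilinearMap ℝ (fun l : Fin j => X (Fin.natAdd i l)) Y))
    (hAbar : ∀ (x : ∀ l : Fin i, X (Fin.castAdd j l)) (z : ∀ l : Fin j, X (Fin.natAdd i l)),
      Abar x z = A (Fin.addCases x z)) :
    WeaklyContOnBounded (fun v => A v) ↔
      ((∀ x : ∀ l : Fin i, X (Fin.castAdd j l), WeaklyContOnBounded (fun z => Abar x z)) ∧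
        WeaklyContOnBounded (fun x : ∀ l : Fin i, X (Fin.castAdd j l) => Abar x)) := by
  have hsplit : ∀ v : ∀ l, X l, (Fin.addCases (fun l => v (Fin.castAdd j l))
      (fun l => v (Fin.natAdd i l)) : ∀ l, X l) = v := by
    intro v
    ext l
    refine Fin.addCases (fun l => ?_) (fun l => ?_) l <;> simp
  constructor
  · intro hA
    refine ⟨?_, ?_⟩
    · intro x Γ _ _ _ z L hb hz
      simp only [hAbar]
      refine hA.tendsto_of_filter atTop (fun a => Fin.addCases x fun l => z l a)
        (Fin.addCases x L) ?_ ?_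
      · intro l
        refine Fin.addCases (fun l => ?_) (fun l => ?_) l
        · exact ⟨‖x l‖, fun a => by simp⟩
        · simpa using hb l
      · intro l
        refine Fin.addCases (fun l => ?_) (fun l => ?_) l
        · intro φ
          simp
        · intro φ
          simpa using hz l φ
    · intro Γ _ _ _ x L hb hx
      choose z hz1 hz2 using fun a =>
        exists_unit_half_opNorm_le (Abar (fun l => x l a) - Abar L)
      -- The merely bounded variables are the last `j` ones.
      have key := tendsto_sub_piecewise A hA (Finset.univ.image (Fin.natAdd i)) atTop
        (fun a => Fin.addCases (fun l => x l a) (z a)) (Fin.addCases L 0)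
        (fun l => by
          refine Fin.addCases (fun l => ?_) (fun l => ?_) l
          · simpa using hb l
          · exact ⟨1, fun a => by simpa using hz1 a l⟩)
        (fun l => by
          refine Fin.addCases (fun l => ?_) (fun l => ?_) l
          · intro _ φ
            simpa using hx l φ
          · intro h
            exact absurd (Finset.mem_image_of_mem _ (Finset.mem_univ l)) h)
      have hpw : ∀ a, (Finset.univ.image (Fin.natAdd i)).piecewise
          (Fin.addCases (fun l => x l a) (z a) : ∀ l, X l) (Fin.addCases L 0) =
          Fin.addCases L (z a) := by
        intro a
        ext l
        refine Fin.addCases (fun l => ?_) (fun l => ?_) l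
        · rw [Finset.piecewise_eq_of_notMem]
          · simp
          · simp only [Finset.mem_image, not_exists, not_and]
            intro m _ h
            have := congrArg Fin.val h
            simp at this
            omega
        · rw [Finset.piecewise_eq_of_mem _ _ _ (Finset.mem_image_of_mem _ (Finset.mem_univ l))]
          simp
      rw [tendsto_iff_norm_sub_tendsto_zero]
      refine squeeze_zero (fun a => norm_nonneg _) hz2 ?_
      have h2 := key.norm.const_mul 2
      rw [norm_zero, mul_zero] at h2
      refine h2.congr fun a => ?_
      rw [hpw a, sub_apply, hAbar, hAbar]
  · rintro ⟨hval, hcont⟩ Γ _ _ _ v L hb hv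
    have eA : ∀ u : ∀ l, X l, A u =
        Abar (fun l => u (Fin.castAdd j l)) (fun l => u (Fin.natAdd i l)) := by
      intro u
      rw [hAbar, hsplit]
    simp only [eA]
    have h1 := hcont Γ (fun l => v (Fin.castAdd j l)) (fun l => L (Fin.castAdd j l))
      (fun l => hb _) (fun l => hv _)
    have h2 := hval (fun l => L (Fin.castAdd j l)) Γ (fun l => v (Fin.natAdd i l))
      (fun l => L (Fin.natAdd i l)) (fun l => hb _) (fun l => hv _)
    choose C hC using hb
    rw [tendsto_iff_norm_sub_tendsto_zero] at h1
    have h3 : Tendsto (fun a => (Abar (fun l => v (Fin.castAdd j l) a) -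
        Abar (fun l => L (Fin.castAdd j l))) (fun l => v (Fin.natAdd i l) a)) atTop (𝓝 0) := by
      refine squeeze_zero_norm (fun a => ?_)
        (by simpa using h1.mul_const (∏ l : Fin j, C (Fin.natAdd i l)))
      refine (ContinuousMultilinearMap.le_opNorm _ _).trans ?_
      gcongr with l
      exact hC _ a
    simpa using h3.add h2
end

section
/- Let X, Y be Banach spaces and P : X → Y a continuous k-homogeneous polynomial with associated symmetric k-linear map P̂. The following are equivalent: (a) there exist a Banach space Z, a compact operator S : X → Z, and a continuous k-homogeneous polynomial Q : Z → Y with P = Q ∘ S; (b) there exist Banach spaces Z₁,…,Z_k, compact operators S_i : X → Z_i (1 ≤ i ≤ k), and a continuous k-linear mapping B : Z₁ × ⋯ × Z_k → Y such that P̂(x₁,…,x_k) = B(S₁x₁,…,S_k x_k) for all x₁,…,x_k ∈ X. Moreover, if (b) holds, then Z, S and Q in (a) can be chosen so that ‖S‖ = max_i ‖S_i‖ and ‖Q‖ = ‖B‖. -/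
/-!
From (a) to (b): if `P = Q ∘ S` with `Q` the diagonal of `Qhat`, then `Phat` and
`Qhat ∘ (S, …, S)` have the same diagonal, hence by polarization (`sum_perm_eq_of_diagonal_eq`)
the same symmetrization. As `Phat` is symmetric, it equals `B ∘ (S, …, S)` with `B` the
symmetrization of `Qhat`.

From (b) to (a): take `W = Z₁ × ⋯ × Z_k` with the sup norm, `T x = (S₁ x, …, S_k x)` and
`Q z = B z`, the diagonal of the `k`-linear map `diagPi B : (w₁, …, w_k) ↦ B (w₁₁, …, w_kk)`.
The unit ball of `W` is the product of the unit balls of the `Z_i`, so `‖Q‖ = ‖B‖`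
(`polyNorm_diagPi`) and `‖T‖ = max_i ‖S_i‖` (`norm_clm_pi`); compactness of `T` is Tychonoff's
theorem for finite products (`isCompactOperator_pi`).
-/

open Filter Topology

universe u

/-- The norm `‖Q‖ = sup {‖Q z‖ : ‖z‖ ≤ 1}` of the continuous `k`-homogeneous polynomial
associated to a continuous `k`-linear map `Qhat`, i.e. of `z ↦ Qhat (z, …, z)`. -/
noncomputable def polyNorm {k : ℕ} {Z Y : Type u}
    [NormedAddCommGroup Z] [NormedSpace ℝ Z] [NormedAddCommGroup Y] [NormedSpace ℝ Y]
    (Qhat : ContinuousMultilinearMap ℝ (fun _ : Fin k => Z) Y) : ℝ :=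
  sSup ((fun z => ‖Qhat fun _ => z‖) '' Metric.closedBall (0 : Z) 1)

/-- Polarization: two continuous `k`-linear maps with the same diagonal have the same
symmetrization, because the sum over permutations is the `k`-th derivative of the diagonal. -/
lemma sum_perm_eq_of_diagonal_eq {k : ℕ} {X Y : Type*}
    [NormedAddCommGroup X] [NormedSpace ℝ X] [NormedAddCommGroup Y] [NormedSpace ℝ Y]
    (f g : ContinuousMultilinearMap ℝ (fun _ : Fin k => X) Y)
    (h : ∀ x, f (fun _ => x) = g fun _ => x) (v : Fin k → X) :
    ∑ σ : Equiv.Perm (Fin k), f (fun i => v (σ i)) =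
      ∑ σ : Equiv.Perm (Fin k), g (fun i => v (σ i)) := by
  rw [← f.iteratedFDeriv_comp_diagonal 0 v, ← g.iteratedFDeriv_comp_diagonal 0 v, funext h]

lemma isCompactOperator_pi {ι X : Type*} [Finite ι] {Z : ι → Type*}
    [Zero X] [TopologicalSpace X] [∀ i, TopologicalSpace (Z i)]
    (f : ∀ i, X → Z i) (hf : ∀ i, IsCompactOperator (f i)) :
    IsCompactOperator fun x i => f i x := by
  choose K hK hmem using hf
  refine ⟨Set.univ.pi K, isCompact_univ_pi hK, ?_⟩
  filter_upwards [Filter.eventually_all.2 hmem] with x hx i _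
  exact hx i

lemma norm_clm_pi {ι X : Type*} [Fintype ι] {Z : ι → Type*}
    [NormedAddCommGroup X] [NormedSpace ℝ X] [∀ i, NormedAddCommGroup (Z i)]
    [∀ i, NormedSpace ℝ (Z i)] (S : ∀ i, X →L[ℝ] Z i) :
    ‖ContinuousLinearMap.pi S‖ = ⨆ i, ‖S i‖ := by
  have hbdd : BddAbove (Set.range fun i => ‖S i‖) := Set.finite_range _ |>.bddAbove
  have hnn : 0 ≤ ⨆ i, ‖S i‖ := Real.iSup_nonneg fun i => norm_nonneg _
  apply le_antisymm
  · refine ContinuousLinearMap.opNorm_le_bound _ hnn fun x => ?_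
    refine (pi_norm_le_iff_of_nonneg (by positivity)).2 fun i => ?_
    exact (S i).le_of_opNorm_le (le_ciSup hbdd i) x
  · refine Real.iSup_le (fun i => ?_) (norm_nonneg _)
    refine ContinuousLinearMap.opNorm_le_bound _ (norm_nonneg _) fun x => ?_
    exact (norm_le_pi_norm (ContinuousLinearMap.pi S x) i).trans
      ((ContinuousLinearMap.pi S).le_opNorm x)

/-- The `k`-linear map `(w₁, …, w_k) ↦ B (w₁ 1, …, w_k k)` on the product of the `Z i`; its
diagonal is `z ↦ B z`. -/
noncomputable def diagPi {k : ℕ} {Z : Fin k → Type u} {Y : Type u}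
    [∀ i, NormedAddCommGroup (Z i)] [∀ i, NormedSpace ℝ (Z i)]
    [NormedAddCommGroup Y] [NormedSpace ℝ Y] (B : ContinuousMultilinearMap ℝ Z Y) :
    ContinuousMultilinearMap ℝ (fun _ : Fin k => ∀ i, Z i) Y :=
  B.compContinuousLinearMap fun i => ContinuousLinearMap.proj i

lemma polyNorm_diagPi {k : ℕ} {Z : Fin k → Type u} {Y : Type u}
    [∀ i, NormedAddCommGroup (Z i)] [∀ i, NormedSpace ℝ (Z i)]
    [NormedAddCommGroup Y] [NormedSpace ℝ Y] (B : ContinuousMultilinearMap ℝ Z Y) :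
    polyNorm (diagPi B) = ‖B‖ := by
  have hdiag : ∀ z : ∀ i, Z i, diagPi B (fun _ => z) = B z := fun z => rfl
  have hub : ∀ z ∈ Metric.closedBall (0 : ∀ i, Z i) 1, ‖B z‖ ≤ ‖B‖ := fun z hz =>
    B.unit_le_opNorm (m := z) (by simpa using hz)
  unfold polyNorm
  simp only [hdiag]
  have hbdd : BddAbove ((fun z => ‖B z‖) '' Metric.closedBall (0 : ∀ i, Z i) 1) :=
    ⟨‖B‖, by rintro _ ⟨z, hz, rfl⟩; exact hub z hz⟩
  apply le_antisymm
  · refine csSup_le (Set.Nonempty.image _ ⟨0, by simp⟩) ?_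
    rintro _ ⟨z, hz, rfl⟩
    exact hub z hz
  · refine B.opNorm_le_bound (Real.sSup_nonneg ?_) fun m => ?_
    · rintro _ ⟨z, -, rfl⟩
      exact norm_nonneg _
    -- Normalize each coordinate; junk division makes `‖m i‖⁻¹ • m i` vanish when `m i` does.
    have hm : m = fun i => ‖m i‖ • (‖m i‖⁻¹ • m i) := by
      funext i
      by_cases h : m i = 0
      · simp [h]
      · rw [smul_smul, mul_inv_cancel₀ (norm_ne_zero_iff.2 h), one_smul]
    have hball : (fun i => ‖m i‖⁻¹ • m i) ∈ Metric.closedBall (0 : ∀ i, Z i) 1 := by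
      rw [mem_closedBall_zero_iff, pi_norm_le_iff_of_nonneg zero_le_one]
      intro i
      rw [norm_smul, norm_inv, norm_norm]
      exact inv_mul_le_one
    conv_lhs => rw [hm, B.map_smul_univ, norm_smul, norm_prod]
    simp only [norm_norm]
    rw [mul_comm]
    gcongr
    exact le_csSup hbdd ⟨_, hball, rfl⟩

/-- Proposition (González–Gutiérrez). For a continuous `k`-homogeneous polynomial `P` with
symmetric `k`-linear map `P̂`, the following are equivalent: (a) `P = Q ∘ S` with `S` a
compact operator and `Q` a continuous `k`-homogeneous polynomial; (b) `P̂ = B ∘ (S₁, …, S_k)`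
with the `S_i` compact operators and `B` a continuous `k`-linear map. Moreover, given (b),
the factorization in (a) can be chosen with `‖S‖ = max_i ‖S_i‖` and `‖Q‖ = ‖B‖`. -/
theorem poly_factors_through_compact_iff_multilinear {k : ℕ} (hk : 0 < k) {X Y : Type u}
    [NormedAddCommGroup X] [NormedSpace ℝ X] [CompleteSpace X]
    [NormedAddCommGroup Y] [NormedSpace ℝ Y] [CompleteSpace Y]
    (P : X → Y) (Phat : ContinuousMultilinearMap ℝ (fun _ : Fin k => X) Y)
    (hsym : ∀ (σ : Equiv.Perm (Fin k)) (x : Fin k → X), Phat (x ∘ σ) = Phat x)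
    (hP : ∀ x : X, P x = Phat fun _ => x) :
    ((∃ (Z : Type u) (_ : NormedAddCommGroup Z) (_ : NormedSpace ℝ Z) (_ : CompleteSpace Z)
        (S : X →L[ℝ] Z), IsCompactOperator S ∧
          ∃ Qhat : ContinuousMultilinearMap ℝ (fun _ : Fin k => Z) Y,
            ∀ x : X, P x = Qhat fun _ => S x) ↔
      (∃ (Z : Fin k → Type u) (_ : ∀ i, NormedAddCommGroup (Z i))
          (_ : ∀ i, NormedSpace ℝ (Z i)) (_ : ∀ i, CompleteSpace (Z i))
          (S : ∀ i, X →L[ℝ] Z i), (∀ i, IsCompactOperator (S i)) ∧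
            ∃ B : ContinuousMultilinearMap ℝ Z Y,
              ∀ x : Fin k → X, Phat x = B fun i => S i (x i))) ∧
    (∀ (Z : Fin k → Type u) [∀ i, NormedAddCommGroup (Z i)] [∀ i, NormedSpace ℝ (Z i)]
        [∀ i, CompleteSpace (Z i)] (S : ∀ i, X →L[ℝ] Z i),
        (∀ i, IsCompactOperator (S i)) →
        ∀ B : ContinuousMultilinearMap ℝ Z Y,
          (∀ x : Fin k → X, Phat x = B fun i => S i (x i)) →
          ∃ (W : Type u) (_ : NormedAddCommGroup W) (_ : NormedSpace ℝ W) (_ : CompleteSpace W)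
            (T : X →L[ℝ] W), IsCompactOperator T ∧
              ∃ Qhat : ContinuousMultilinearMap ℝ (fun _ : Fin k => W) Y,
                (∀ x : X, P x = Qhat fun _ => T x) ∧
                ‖T‖ = ⨆ i, ‖S i‖ ∧ polyNorm Qhat = ‖B‖) := by
  have moreover : ∀ (Z : Fin k → Type u) [∀ i, NormedAddCommGroup (Z i)]
      [∀ i, NormedSpace ℝ (Z i)] [∀ i, CompleteSpace (Z i)] (S : ∀ i, X →L[ℝ] Z i),
      (∀ i, IsCompactOperator (S i)) →
      ∀ B : ContinuousMultilinearMap ℝ Z Y,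
        (∀ x : Fin k → X, Phat x = B fun i => S i (x i)) →
        ∃ (W : Type u) (_ : NormedAddCommGroup W) (_ : NormedSpace ℝ W) (_ : CompleteSpace W)
          (T : X →L[ℝ] W), IsCompactOperator T ∧
            ∃ Qhat : ContinuousMultilinearMap ℝ (fun _ : Fin k => W) Y,
              (∀ x : X, P x = Qhat fun _ => T x) ∧
              ‖T‖ = ⨆ i, ‖S i‖ ∧ polyNorm Qhat = ‖B‖ := by
    intro Z _ _ _ S hS B hB
    exact ⟨∀ i, Z i, inferInstance, inferInstance, inferInstance, ContinuousLinearMap.pi S,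
      isCompactOperator_pi (fun i => S i) hS, diagPi B, fun x => (hP x).trans (hB fun _ => x),
      norm_clm_pi S, polyNorm_diagPi B⟩
  refine ⟨⟨?_, ?_⟩, moreover⟩
  · rintro ⟨Z, _, _, _, S, hS, Qhat, hQ⟩
    refine ⟨fun _ => Z, fun _ => inferInstance, fun _ => inferInstance, fun _ => inferInstance,
      fun _ => S, fun _ => hS,
      (k.factorial : ℝ)⁻¹ • ∑ σ : Equiv.Perm (Fin k), Qhat.domDomCongr σ, fun x => ?_⟩
    have hpol := sum_perm_eq_of_diagonal_eq Phat (Qhat.compContinuousLinearMap fun _ => S)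
      (fun y => (hP y).symm.trans (hQ y)) x
    have hleft : ∑ σ : Equiv.Perm (Fin k), Phat (fun i => x (σ i)) =
        (k.factorial : ℝ) • Phat x := by
      refine (Finset.sum_congr rfl fun σ _ => hsym σ x).trans ?_
      rw [Finset.sum_const, Finset.card_univ,
        Fintype.card_perm, Fintype.card_fin, Nat.cast_smul_eq_nsmul]
    rw [hleft] at hpol
    have hk0 : (k.factorial : ℝ) ≠ 0 := Nat.cast_ne_zero.2 k.factorial_ne_zero
    rw [← inv_smul_smul₀ hk0 (Phat x), hpol, smul_apply,
      sum_apply]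
    rfl
  · rintro ⟨Z, _, _, _, S, hS, B, hB⟩
    obtain ⟨W, i₁, i₂, i₃, T, hT, Qhat, hQ, -⟩ := moreover Z S hS B hB
    exact ⟨W, i₁, i₂, i₃, T, hT, Qhat, hQ⟩
end

section
/- Let X₁,…,X_k, Y be Banach spaces and ε > 0. For each continuous k-linear mapping A : X₁ × ⋯ × X_k → Y that is weakly continuous on bounded sets, there exist Banach spaces Z₁,…,Z_k, compact operators S_i : X_i → Z_i (1 ≤ i ≤ k), and a continuous k-linear mapping B : Z₁ × ⋯ × Z_k → Y that is weakly continuous on bounded sets, such that A(x₁,…,x_k) = B(S₁x₁,…,S_k x_k) for all x_i ∈ X_i, and ‖B‖·‖S₁‖·…·‖S_k‖ ≤ (1+ε)‖A‖. -/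
/-!
Each slice of `A`, the operator sending `x` in slot `l` to the `(k-1)`-linear map `A (…, x, …)`, is
compact: a free variable in a ball can be replaced, up to a weakly small error, by one of finitely
many points, so `A` tends to `0` uniformly when one slot tends weakly to `0` in a ball
(`tendsto_pi_zero`, `WeaklyContOnBounded.compactSlice`). Conversely, compact slices imply weak
continuity on bounded sets (`weaklyContOnBounded_of_compactSlice`).

The factorization replaces the norms by weaker seminorms, one slot at a time. Let
`p x = sup ‖A (…, x, …)‖` be the slice seminorm of slot `l`, so that `p ≤ ‖A‖ q` for the current
seminorm `q`. A real-interpolation construction, a supremum of infimal convolutions of multiples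
of `p` and `q`, gives a seminorm `r` with `‖A‖⁻¹ p ≤ r ≤ q` such that the `q`-ball is totally
bounded for `r` and the `r`-ball is totally bounded for `p` (`CompactRel.interpolate`). The first
inequality keeps the bound on `A`, and total boundedness keeps all slices compact
(`compactSlice_update`). After all slots are treated, `Z l` is the completion of `X l` for its
final seminorm, `S l` is the canonical map, which is compact of norm at most `1`, and `B` is the
extension of `A` by density, with `‖B‖ ≤ ‖A‖`.
-/

open Filter Topology

universe u

/-! ### Relative compactness of seminorms and interpolation -/

/-- The seminorm `p` is compact relative to `q`: the open `q`-unit ball is totally bounded for `p`. -/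
def CompactRel {E : Type u} [AddCommGroup E] [Module ℝ E] (q p : Seminorm ℝ E) : Prop :=
  ∀ δ : ℝ, 0 < δ → ∃ t : Set E, t.Finite ∧ ∀ x, q x < 1 → ∃ y ∈ t, p (x - y) ≤ δ

/-- The centres of the covering balls may be taken in the `q`-unit ball. -/
theorem CompactRel.centers {E : Type u} [AddCommGroup E] [Module ℝ E] {q p : Seminorm ℝ E}
    (h : CompactRel q p) {δ : ℝ} (hδ : 0 < δ) :
    ∃ t : Set E, t.Finite ∧ (∀ y ∈ t, q y < 1) ∧ ∀ x, q x < 1 → ∃ y ∈ t, p (x - y) ≤ δ := by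
  classical
  obtain ⟨t, ht, h1⟩ := h (δ / 2) (by positivity)
  have hch : ∀ y : E, ∃ y' : E, q y' < 1 ∧
      ((∃ x, q x < 1 ∧ p (x - y) ≤ δ / 2) → p (y' - y) ≤ δ / 2) := by
    intro y
    by_cases hy : ∃ x, q x < 1 ∧ p (x - y) ≤ δ / 2
    · obtain ⟨x, hx, hxy⟩ := hy
      exact ⟨x, hx, fun _ => hxy⟩
    · exact ⟨0, by simp, fun h => absurd h hy⟩
  choose c hc1 hc2 using hch
  refine ⟨c '' t, ht.image c, ?_, ?_⟩
  · rintro _ ⟨y, _, rfl⟩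
    exact hc1 y
  · intro x hx
    obtain ⟨y, hy, hxy⟩ := h1 x hx
    refine ⟨c y, ⟨y, hy, rfl⟩, ?_⟩
    have h2 := hc2 y ⟨x, hx, hxy⟩
    have h3 := map_sub_le_add p (x - y) (c y - y)
    have h4 : x - y - (c y - y) = x - c y := by abel
    rw [h4] at h3
    linarith

theorem CompactRel.cover {E : Type u} [AddCommGroup E] [Module ℝ E] {q p : Seminorm ℝ E}
    (h : CompactRel q p) {R δ : ℝ} (hR : 0 < R) (hδ : 0 < δ) :
    ∃ t : Set E, t.Finite ∧ ∀ x, q x < R → ∃ y ∈ t, p (x - y) ≤ δ := by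
  obtain ⟨t, ht, h1⟩ := h (δ / R) (by positivity)
  refine ⟨(fun y => R • y) '' t, ht.image _, fun x hx => ?_⟩
  obtain ⟨y, hy, hxy⟩ := h1 (R⁻¹ • x) (by
    rw [map_smul_eq_mul, Real.norm_eq_abs, abs_of_pos (by positivity), inv_mul_lt_iff₀ hR]
    simpa using hx)
  refine ⟨_, ⟨y, hy, rfl⟩, ?_⟩
  have h2 : x - R • y = R • (R⁻¹ • x - y) := by
    rw [smul_sub, smul_smul, mul_inv_cancel₀ hR.ne', one_smul]
  simp only
  rw [h2, map_smul_eq_mul, Real.norm_eq_abs, abs_of_pos hR]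
  rw [le_div_iff₀ hR] at hxy
  linarith

/-- If `p ≤ M q` is compact relative to `q`, then there is an intermediate seminorm
`M⁻¹ p ≤ r ≤ q` such that both steps `q → r` and `r → p` are compact. It is
`r = sup_n j_n`, where `j_n` is the infimal convolution of `2ⁿ M⁻¹ p` and `2⁻ⁿ q`. -/
theorem CompactRel.interpolate {E : Type u} [AddCommGroup E] [Module ℝ E] {q p : Seminorm ℝ E}
    (h : CompactRel q p) {M : ℝ} (hM : 0 < M) (hpq : ∀ x, p x ≤ M * q x) :
    ∃ r : Seminorm ℝ E, (∀ x, r x ≤ q x) ∧ (∀ x, p x ≤ M * r x) ∧ CompactRel q r ∧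
      CompactRel r p := by
  classical
  let a : ℕ → NNReal := fun n => 2 ^ n * (M.toNNReal)⁻¹
  let b : ℕ → NNReal := fun n => (2 ^ n)⁻¹
  have ha : ∀ n, ((a n : NNReal) : ℝ) = 2 ^ n * M⁻¹ := fun n => by
    simp [a, hM.le]
  have hb : ∀ n, ((b n : NNReal) : ℝ) = (2 ^ n)⁻¹ := fun n => by simp [b]
  let j : ℕ → Seminorm ℝ E := fun n => (a n • p) ⊓ (b n • q)
  have hj : ∀ n x, j n x = ⨅ u, (2 ^ n * M⁻¹ * p u + (2 ^ n)⁻¹ * q (x - u)) := by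
    intro n x
    simp only [j, Seminorm.inf_apply, smul_apply, NNReal.smul_def, smul_eq_mul, ha, hb]
  have hbdd : ∀ n x, BddBelow (Set.range fun u =>
      (2 ^ n * M⁻¹ * p u + (2 ^ n)⁻¹ * q (x - u))) := by
    intro n x
    refine ⟨0, ?_⟩
    rintro _ ⟨u, rfl⟩
    have := apply_nonneg p u
    have := apply_nonneg q (x - u)
    positivity
  have hj1 : ∀ n x, j n x ≤ (2 ^ n)⁻¹ * q x := by
    intro n x
    rw [hj]
    refine (ciInf_le (hbdd n x) 0).trans ?_
    simp
  have hj2 : ∀ n x, j n x ≤ 2 ^ n * M⁻¹ * p x := by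
    intro n x
    rw [hj]
    refine (ciInf_le (hbdd n x) x).trans ?_
    simp
  have hj3 : ∀ n x, j n x < 1 → ∃ u, p u ≤ M * (2 ^ n)⁻¹ ∧ q (x - u) < 2 ^ n := by
    intro n x hx
    rw [hj] at hx
    obtain ⟨u, hu⟩ := exists_lt_of_ciInf_lt hx
    have h1 := apply_nonneg p u
    have h2 := apply_nonneg q (x - u)
    have h3 : (0:ℝ) < 2 ^ n := by positivity
    refine ⟨u, ?_, ?_⟩
    · have h4 : 2 ^ n * M⁻¹ * p u ≤ 1 := by
        have : 0 ≤ (2 ^ n)⁻¹ * q (x - u) := by positivity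
        linarith
      calc p u = (M * (2 ^ n)⁻¹) * (2 ^ n * M⁻¹ * p u) := by field_simp
        _ ≤ (M * (2 ^ n)⁻¹) * 1 := by gcongr
        _ = _ := by ring
    · have h4 : (2 ^ n)⁻¹ * q (x - u) < 1 := by
        have : 0 ≤ 2 ^ n * M⁻¹ * p u := by positivity
        linarith
      rwa [inv_mul_lt_iff₀ h3, mul_one] at h4
  have hle : ∀ n x, j n x ≤ q x := by
    intro n x
    refine (hj1 n x).trans ?_
    have h1 : ((2:ℝ) ^ n)⁻¹ ≤ 1 := inv_le_one_of_one_le₀ (one_le_pow₀ (by norm_num))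
    have := apply_nonneg q x
    nlinarith
  have hB : BddAbove (Set.range j) := ⟨q, by
    rintro _ ⟨n, rfl⟩
    exact hle n⟩
  have hBx : ∀ x, BddAbove (Set.range fun n => j n x) := fun x => ⟨q x, by
    rintro _ ⟨n, rfl⟩
    exact hle n x⟩
  have hr : ∀ x, (⨆ n, j n) x = ⨆ n, j n x := fun x => Seminorm.iSup_apply hB
  refine ⟨⨆ n, j n, fun x => ?_, fun x => ?_, ?_, ?_⟩
  · rw [hr]
    exact ciSup_le fun n => hle n x
  · rw [hr]
    -- In fact `j 0 = M⁻¹ p`, because `M⁻¹ p ≤ q`; so no constant is lost.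
    have h0 : M⁻¹ * p x ≤ j 0 x := by
      rw [hj]
      refine le_ciInf fun u => ?_
      have h1 := map_add_le_add p u (x - u)
      rw [add_sub_cancel] at h1
      have h2 := hpq (x - u)
      have h3 : M⁻¹ * p (x - u) ≤ q (x - u) := by
        rw [inv_mul_le_iff₀ hM]; exact h2
      have h4 : M⁻¹ * p x ≤ M⁻¹ * (p u + p (x - u)) := by gcongr
      simp only [pow_zero, one_mul, inv_one]
      linarith
    have h1 := h0.trans (le_ciSup (hBx x) 0)
    rwa [inv_mul_le_iff₀ hM] at h1
  -- `j n ≤ 2⁻ⁿ q` handles large `n`, and `j n ≤ 2ⁿ M⁻¹ p` the finitely many others.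
  · intro δ hδ
    obtain ⟨N, hN⟩ := exists_pow_lt_of_lt_one (show 0 < δ / 2 by positivity)
      (show (1/2:ℝ) < 1 by norm_num)
    obtain ⟨t, ht, htq, h1⟩ := h.centers (δ := δ * M * (2 ^ N)⁻¹) (by positivity)
    refine ⟨t, ht, fun x hx => ?_⟩
    obtain ⟨y, hy, hxy⟩ := h1 x hx
    refine ⟨y, hy, ?_⟩
    rw [hr]
    refine ciSup_le fun n => ?_
    rcases le_total N n with hn | hn
    · have h2 : q (x - y) ≤ 2 := by
        have := map_sub_le_add q x y
        have := htq y hy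
        linarith
      have h3 : ((2:ℝ) ^ n)⁻¹ ≤ δ / 2 := by
        have : ((2:ℝ) ^ n)⁻¹ ≤ (2 ^ N)⁻¹ := by
          gcongr
          norm_num
        refine this.trans ?_
        rw [← inv_pow]
        have := hN.le
        rwa [one_div] at this
      calc j n (x - y) ≤ (2 ^ n)⁻¹ * q (x - y) := hj1 n _
        _ ≤ δ / 2 * 2 := by gcongr
        _ = δ := by ring
    · calc j n (x - y) ≤ 2 ^ n * M⁻¹ * p (x - y) := hj2 n _
        _ ≤ 2 ^ N * M⁻¹ * (δ * M * (2 ^ N)⁻¹) := by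
          gcongr
          norm_num
        _ = δ := by field_simp
  -- The `r`-unit ball lies in a small `p`-ball plus the `q`-ball of radius `2 ^ N`.
  · intro δ hδ
    obtain ⟨N, hN⟩ := exists_pow_lt_of_lt_one (show 0 < δ / 2 / M by positivity)
      (show (1/2:ℝ) < 1 by norm_num)
    obtain ⟨t, ht, h1⟩ := h.cover (R := 2 ^ N) (δ := δ / 2) (by positivity) (by positivity)
    refine ⟨t, ht, fun x hx => ?_⟩
    rw [hr] at hx
    obtain ⟨u, hu1, hu2⟩ := hj3 N x ((le_ciSup (hBx x) N).trans_lt hx)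
    obtain ⟨y, hy, hxy⟩ := h1 _ hu2
    refine ⟨y, hy, ?_⟩
    have h2 := map_add_le_add p u (x - u - y)
    have h3 : u + (x - u - y) = x - y := by abel
    rw [h3] at h2
    have h4 : M * (2 ^ N)⁻¹ ≤ δ / 2 := by
      rw [one_div, inv_pow, lt_div_iff₀ hM] at hN
      linarith
    linarith

/-! ### Multilinear maps bounded by families of seminorms -/

section SeminormFamilies

variable {k : ℕ} {X : Fin k → Type u} {Y : Type u} [∀ l, AddCommGroup (X l)]
  [∀ l, Module ℝ (X l)] [NormedAddCommGroup Y] [NormedSpace ℝ Y]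

/-- A bound on the product of the open unit balls gives a product bound; `q j (m j) = 0` is allowed,
so the rescaling uses `q j (m j) + η` and `η → 0`. -/
theorem bound_of_unit_balls (A : MultilinearMap ℝ X Y) (q : ∀ l, Seminorm ℝ (X l)) {M : ℝ}
    (hM : ∀ m, (∀ j, q j (m j) < 1) → ‖A m‖ ≤ M) (m : ∀ l, X l) :
    ‖A m‖ ≤ M * ∏ j, q j (m j) := by
  have key : ∀ η : ℝ, 0 < η → ‖A m‖ ≤ M * ∏ j, (q j (m j) + η) := by
    intro η hη
    have hpos : ∀ j, 0 < q j (m j) + η := fun j => by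
      have := apply_nonneg (q j) (m j)
      linarith
    have h1 := hM (fun j => (q j (m j) + η)⁻¹ • m j) (fun j => by
      rw [map_smul_eq_mul, Real.norm_eq_abs, abs_of_pos (inv_pos.2 (hpos j)),
        inv_mul_lt_iff₀ (hpos j)]
      linarith)
    rw [A.map_smul_univ, norm_smul, Real.norm_eq_abs, Finset.prod_inv_distrib,
      abs_of_pos (inv_pos.2 (Finset.prod_pos fun j _ => hpos j)),
      inv_mul_le_iff₀ (Finset.prod_pos fun j _ => hpos j)] at h1
    linarith
  have hcont : Tendsto (fun η : ℝ => M * ∏ j, (q j (m j) + η)) (𝓝[>] 0)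
      (𝓝 (M * ∏ j, (q j (m j) + 0))) := by
    apply Tendsto.mono_left _ nhdsWithin_le_nhds
    apply Continuous.tendsto
    fun_prop
  simp only [add_zero] at hcont
  exact ge_of_tendsto hcont (eventually_nhdsWithin_of_forall fun η hη => key η hη)

theorem bound_update (A : MultilinearMap ℝ X Y) (q : ∀ l, Seminorm ℝ (X l)) {M : ℝ}
    (hM : ∀ m, (∀ j, q j (m j) < 1) → ‖A m‖ ≤ M) (l : Fin k) (x : X l) (m : ∀ l, X l)
    (hm : ∀ j, j ≠ l → q j (m j) < 1) :
    ‖A (Function.update m l x)‖ ≤ M * q l x := by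
  have hM0 : 0 ≤ M := (norm_nonneg _).trans (hM 0 (by simp))
  refine (bound_of_unit_balls A q hM _).trans ?_
  gcongr
  rw [← Finset.mul_prod_erase _ _ (Finset.mem_univ l), Function.update_self]
  refine mul_le_of_le_one_right (apply_nonneg _ _) ?_
  refine Finset.prod_le_one (fun j _ => apply_nonneg _ _) fun j hj => ?_
  rw [Function.update_of_ne (Finset.ne_of_mem_erase hj)]
  exact (hm j (Finset.ne_of_mem_erase hj)).le

/-- The seminorm `p x = sup ‖A (m₁, …, x, …, m_k)‖`, with `x` in slot `l` and the other `m j` in the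
open unit balls. -/
theorem exists_slice_seminorm (A : MultilinearMap ℝ X Y) (q : ∀ l, Seminorm ℝ (X l)) {M : ℝ}
    (hM : ∀ m, (∀ j, q j (m j) < 1) → ‖A m‖ ≤ M) (l : Fin k) :
    ∃ p : Seminorm ℝ (X l),
      (∀ x m, (∀ j, j ≠ l → q j (m j) < 1) → ‖A (Function.update m l x)‖ ≤ p x) ∧
      (∀ x c, (∀ m, (∀ j, j ≠ l → q j (m j) < 1) → ‖A (Function.update m l x)‖ ≤ c) →
        p x ≤ c) := by
  let f : {m : ∀ l, X l // ∀ j, j ≠ l → q j (m j) < 1} → Seminorm ℝ (X l) :=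
    fun m => (normSeminorm ℝ Y).comp (A.toLinearMap m.1 l)
  have hf : ∀ m x, f m x = ‖A (Function.update m.1 l x)‖ := fun m x => rfl
  have hbx : ∀ x, BddAbove (Set.range fun m => f m x) := by
    intro x
    refine ⟨M * q l x, ?_⟩
    rintro _ ⟨m, rfl⟩
    exact bound_update A q hM l x m.1 m.2
  have hb : BddAbove (Set.range f) := Seminorm.bddAbove_range_iff.2 hbx
  refine ⟨⨆ m, f m, fun x m hm => ?_, fun x c hc => ?_⟩
  · rw [Seminorm.iSup_apply hb]
    exact le_ciSup (hbx x) ⟨m, hm⟩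
  · rw [Seminorm.iSup_apply hb]
    have : Nonempty {m : ∀ l, X l // ∀ j, j ≠ l → q j (m j) < 1} := ⟨⟨0, by simp⟩⟩
    exact ciSup_le fun m => hc m.1 m.2

/-- The operator sending `x : X l` to the map `A (…, x, …)` in the remaining variables is compact,
when every `X j` is measured by the seminorm `q j`: the image of the open unit ball is totally
bounded. The entry `m l` is irrelevant, since it is overwritten. -/
def CompactSlice (A : MultilinearMap ℝ X Y) (q : ∀ l, Seminorm ℝ (X l)) (l : Fin k) : Prop :=
  ∀ δ : ℝ, 0 < δ → ∃ t : Set (X l), t.Finite ∧ ∀ x, q l x < 1 → ∃ y ∈ t,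
    ∀ m, (∀ j, j ≠ l → q j (m j) < 1) → ‖A (Function.update m l (x - y))‖ ≤ δ

/-- The seminorm in slot `l` can be replaced by one that is compact relative to it, without changing
the bound `M` and keeping all slices compact. For a slice `i ≠ l`, the new unit ball in slot `l`
lies in a finite set plus a small ball of the slice seminorm `p`; the finite set is controlled by
the old slice `i`, and the small ball contributes little, uniformly. -/
theorem compactSlice_update (A : MultilinearMap ℝ X Y) (q : ∀ l, Seminorm ℝ (X l)) {M : ℝ}
    (hM0 : 0 < M) (hM : ∀ m, (∀ j, q j (m j) < 1) → ‖A m‖ ≤ M)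
    (hc : ∀ i, CompactSlice A q i) (l : Fin k) :
    ∃ r : Seminorm ℝ (X l), (∀ x, r x ≤ q l x) ∧ CompactRel (q l) r ∧
      (∀ m, (∀ j, Function.update q l r j (m j) < 1) → ‖A m‖ ≤ M) ∧
      ∀ i, CompactSlice A (Function.update q l r) i := by
  obtain ⟨p, hp1, hp2⟩ := exists_slice_seminorm A q hM l
  have hpq : ∀ x, p x ≤ M * q l x := fun x =>
    hp2 x _ fun m hm => bound_update A q hM l x m hm
  have hcp : CompactRel (q l) p := by
    intro δ hδ
    obtain ⟨t, ht, h⟩ := hc l δ hδ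
    refine ⟨t, ht, fun x hx => ?_⟩
    obtain ⟨y, hy, hxy⟩ := h x hx
    exact ⟨y, hy, hp2 _ _ hxy⟩
  obtain ⟨r, hrq, hpr, hqr, hrp⟩ := hcp.interpolate hM0 hpq
  refine ⟨r, hrq, hqr, ?_, ?_⟩
  · intro m hm
    have h1 := hp1 (m l) m (fun j hj => by simpa [Function.update_of_ne hj] using hm j)
    rw [Function.update_eq_self] at h1
    have h2 := hm l
    rw [Function.update_self] at h2
    have h3 := hpr (m l)
    nlinarith
  · intro i
    by_cases hil : i = l
    · subst hil
      intro δ hδ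
      obtain ⟨t, ht, h⟩ := hrp δ hδ
      refine ⟨t, ht, fun x hx => ?_⟩
      rw [Function.update_self] at hx
      obtain ⟨y, hy, hxy⟩ := h x hx
      refine ⟨y, hy, fun m hm => (hp1 _ m fun j hj => ?_).trans hxy⟩
      simpa [Function.update_of_ne hj] using hm j hj
    · intro δ hδ
      obtain ⟨t, ht, h⟩ := hrp (δ / 6) (by positivity)
      obtain ⟨C, hC⟩ : ∃ C : ℝ, ∀ y ∈ t, q l y ≤ C := by
        obtain ⟨C, hC⟩ := (ht.image (q l)).bddAbove
        exact ⟨C, fun y hy => hC ⟨y, hy, rfl⟩⟩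
      let D := max C 0 + 1
      have hD : 0 < D := by positivity
      have hDt : ∀ y ∈ t, q l y < D := fun y hy =>
        ((hC y hy).trans (le_max_left C 0)).trans_lt (lt_add_one _)
      obtain ⟨pi, hpi1, hpi2⟩ := exists_slice_seminorm A q hM i
      have hci : CompactRel (q i) pi := by
        intro δ hδ
        obtain ⟨t, ht, h⟩ := hc i δ hδ
        refine ⟨t, ht, fun x hx => ?_⟩
        obtain ⟨y, hy, hxy⟩ := h x hx
        exact ⟨y, hy, hpi2 _ _ hxy⟩
      obtain ⟨s, hs, hsq, hsi⟩ := hci.centers (δ := δ / 2 / D) (by positivity)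
      refine ⟨s, hs, fun x hx => ?_⟩
      rw [Function.update_of_ne hil] at hx
      obtain ⟨y, hy, hxy⟩ := hsi x hx
      refine ⟨y, hy, fun m hm => ?_⟩
      have hli : l ≠ i := fun h => hil h.symm
      have hml := hm l hli
      rw [Function.update_self] at hml
      have hmj : ∀ j, j ≠ i → j ≠ l → q j (m j) < 1 := fun j hj hjl => by
        simpa [Function.update_of_ne hjl] using hm j hj
      obtain ⟨y', hy', hz⟩ := h (m l) hml
      set w := x - y with hw
      -- `q i w < 2`, and the factor `3` brings `w` into the open unit ball.
      have hqw : q i ((3:ℝ)⁻¹ • w) < 1 := by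
        rw [map_smul_eq_mul, Real.norm_eq_abs, abs_of_pos (by norm_num)]
        have := map_sub_le_add (q i) x y
        have := hsq y hy
        rw [← hw] at *
        linarith
      have hsplit : A (Function.update m i w) =
          D • A (Function.update (Function.update m l (D⁻¹ • y')) i w) +
          (3:ℝ) • A (Function.update (Function.update m i ((3:ℝ)⁻¹ • w)) l (m l - y')) := by
        have e1 : D • A (Function.update (Function.update m l (D⁻¹ • y')) i w) =
            A (Function.update (Function.update m i w) l y') := by
          rw [Function.update_comm hli, ← A.map_update_smul, smul_smul, mul_inv_cancel₀ hD.ne',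
            one_smul]
        have e2 : (3:ℝ) • A (Function.update (Function.update m i ((3:ℝ)⁻¹ • w)) l (m l - y')) =
            A (Function.update (Function.update m i w) l (m l - y')) := by
          rw [Function.update_comm hil, ← A.map_update_smul, smul_smul,
            mul_inv_cancel₀ (by norm_num : (3:ℝ) ≠ 0), one_smul, Function.update_comm hli]
        rw [e1, e2, ← A.map_update_add, add_sub_cancel, Function.update_comm hil,
          Function.update_eq_self]
      have h1 : ‖A (Function.update (Function.update m l (D⁻¹ • y')) i w)‖ ≤ δ / 2 / D := by
        refine (hpi1 _ _ fun j hj => ?_).trans hxy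
        by_cases hjl : j = l
        · subst hjl
          rw [Function.update_self, map_smul_eq_mul, Real.norm_eq_abs,
            abs_of_pos (inv_pos.2 hD), inv_mul_lt_iff₀ hD, mul_one]
          exact hDt y' hy'
        · rw [Function.update_of_ne hjl]
          exact hmj j hj hjl
      have h2 : ‖A (Function.update (Function.update m i ((3:ℝ)⁻¹ • w)) l (m l - y'))‖
          ≤ δ / 6 := by
        refine (hp1 _ _ fun j hj => ?_).trans hz
        by_cases hji : j = i
        · subst hji
          rw [Function.update_self]
          exact hqw
        · rw [Function.update_of_ne hji]
          exact hmj j hji hj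
      rw [hsplit]
      refine (norm_add_le _ _).trans ?_
      rw [norm_smul, norm_smul, Real.norm_eq_abs, Real.norm_eq_abs, abs_of_pos hD,
        abs_of_pos (by norm_num : (0:ℝ) < 3)]
      rw [le_div_iff₀ hD] at h1
      linarith

theorem exists_compact_family (A : MultilinearMap ℝ X Y) (q₀ : ∀ l, Seminorm ℝ (X l)) {M : ℝ}
    (hM0 : 0 < M) (hM : ∀ m, (∀ j, q₀ j (m j) < 1) → ‖A m‖ ≤ M)
    (hc : ∀ i, CompactSlice A q₀ i) :
    ∃ q : ∀ l, Seminorm ℝ (X l), (∀ l x, q l x ≤ q₀ l x) ∧ (∀ l, CompactRel (q₀ l) (q l)) ∧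
      (∀ m, (∀ j, q j (m j) < 1) → ‖A m‖ ≤ M) ∧ ∀ i, CompactSlice A q i := by
  suffices H : ∀ s : Finset (Fin k), ∃ q : ∀ l, Seminorm ℝ (X l), (∀ l x, q l x ≤ q₀ l x) ∧
      (∀ l ∈ s, CompactRel (q₀ l) (q l)) ∧
      (∀ m, (∀ j, q j (m j) < 1) → ‖A m‖ ≤ M) ∧ ∀ i, CompactSlice A q i by
    obtain ⟨q, h1, h2, h3⟩ := H Finset.univ
    exact ⟨q, h1, fun l => h2 l (Finset.mem_univ l), h3⟩
  intro s
  induction s using Finset.induction_on with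
  | empty => exact ⟨q₀, fun _ _ => le_rfl, by simp, hM, hc⟩
  | insert l s _ ih =>
    obtain ⟨q, h1, h2, h3, h4⟩ := ih
    obtain ⟨r, hr1, hr2, hr3, hr4⟩ := compactSlice_update A q hM0 h3 h4 l
    refine ⟨Function.update q l r, fun j x => ?_, fun j hj => ?_, hr3, hr4⟩
    · by_cases hjl : j = l
      · subst hjl
        rw [Function.update_self]
        exact (hr1 x).trans (h1 j x)
      · rw [Function.update_of_ne hjl]
        exact h1 j x
    · by_cases hjl : j = l
      · subst hjl
        rw [Function.update_self]
        intro δ hδ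
        obtain ⟨t, ht, h⟩ := hr2 δ hδ
        exact ⟨t, ht, fun x hx => h x ((h1 j x).trans_lt hx)⟩
      · rw [Function.update_of_ne hjl]
        exact h2 j (Finset.mem_of_mem_insert_of_ne hj hjl)

end SeminormFamilies

/-! ### Weak continuity on bounded sets and compact slices -/

section WeakFilters

variable {E : Type u} [NormedAddCommGroup E] [NormedSpace ℝ E]

/-- The filter of weak neighbourhoods of `L`, restricted to the closed ball of radius `r` about `0`. -/
def weakBdd (r : ℝ) (L : E) : Filter E :=
  comap (fun x (φ : E →L[ℝ] ℝ) => φ x) (𝓝 fun φ => φ L) ⊓ 𝓟 (Metric.closedBall 0 r)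

/-- Bounded sets are weakly totally bounded: by Tychonoff, the ball sits in a compact product of
intervals indexed by the dual. -/
theorem exists_finite_cover {r : ℝ} {s : Set E} (hs : s ∈ weakBdd (2 * r) (0 : E)) :
    ∃ t : Set E, t.Finite ∧ ∀ x, ‖x‖ ≤ r → ∃ y ∈ t, x - y ∈ s := by
  rw [weakBdd, mem_inf_principal, mem_comap] at hs
  obtain ⟨u, hu, hus⟩ := hs
  let e : E → ((E →L[ℝ] ℝ) → ℝ) := fun x φ => φ x
  have htb : TotallyBounded (e '' Metric.closedBall 0 r) := by
    have hK : IsCompact (Set.univ.pi fun φ : E →L[ℝ] ℝ => Metric.closedBall (0:ℝ) (‖φ‖ * r)) :=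
      isCompact_univ_pi fun φ => isCompact_closedBall _ _
    refine hK.totallyBounded.subset ?_
    rintro _ ⟨x, hx, rfl⟩ φ _
    rw [mem_closedBall_zero_iff] at hx ⊢
    exact (φ.le_opNorm x).trans (by gcongr)
  have hU : {w : ((E →L[ℝ] ℝ) → ℝ) × ((E →L[ℝ] ℝ) → ℝ) | w.1 - w.2 ∈ u} ∈
      uniformity ((E →L[ℝ] ℝ) → ℝ) := by
    rw [uniformity_eq_comap_nhds_zero_swapped]
    refine ⟨u, ?_, fun w hw => hw⟩
    have h0 : (fun φ : E →L[ℝ] ℝ => φ (0 : E)) = 0 := by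
      funext φ
      simp
    rwa [h0] at hu
  obtain ⟨T, hTs, hT, hcov⟩ := htb.exists_subset hU
  obtain ⟨t, htr, ht, rfl⟩ :=
    (Set.exists_subset_image_finite_and (f := e) (s := Metric.closedBall 0 r)
      (p := fun T' => T' = T)).1 ⟨T, hTs, hT, rfl⟩
  refine ⟨t, ht, fun x hx => ?_⟩
  have h1 := hcov ⟨x, mem_closedBall_zero_iff.2 hx, rfl⟩
  simp only [Set.mem_iUnion] at h1
  obtain ⟨_, ⟨y, hy, rfl⟩, hxy⟩ := h1
  refine ⟨y, hy, hus (a := x - y) ?_ ?_⟩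
  · have : e x - e y ∈ u := hxy
    have h2 : e x - e y = fun φ : E →L[ℝ] ℝ => φ (x - y) := by
      ext φ
      simp [e]
    rwa [h2] at this
  · rw [mem_closedBall_zero_iff]
    have := mem_closedBall_zero_iff.1 (htr hy)
    have := norm_sub_le x y
    linarith

end WeakFilters

section Weak

variable {k : ℕ} {X : Fin k → Type u} {Y : Type u} [∀ l, NormedAddCommGroup (X l)]
  [∀ l, NormedSpace ℝ (X l)] [NormedAddCommGroup Y]

/-- Filter form of weak continuity on bounded sets. The net is indexed by pairs `(s, a)` with `s` in
the filter and `a ∈ s`, ordered by reverse inclusion of `s`. -/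
theorem WeaklyContOnBounded.tendsto_pi {A : (∀ l, X l) → Y} (hA : WeaklyContOnBounded A)
    (r : Fin k → ℝ) (L : ∀ l, X l) :
    Tendsto A (Filter.pi fun l => weakBdd (r l) (L l)) (𝓝 (A L)) := by
  set f := Filter.pi fun l => weakBdd (r l) (L l) with hf
  rcases f.eq_or_neBot with h0 | h0
  · rw [h0]
    exact tendsto_bot
  let s₀ : Set (∀ l, X l) := {x | ∀ l, ‖x l‖ ≤ r l}
  have hs₀ : s₀ ∈ f := by
    have : ∀ l, ∀ᶠ x in f, ‖x l‖ ≤ r l := fun l => by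
      have h1 : ∀ᶠ y in weakBdd (r l) (L l), ‖y‖ ≤ r l := by
        have : Metric.closedBall 0 (r l) ∈ weakBdd (r l) (L l) :=
          mem_inf_of_right (mem_principal_self _)
        filter_upwards [this] with y hy
        exact mem_closedBall_zero_iff.1 hy
      exact (tendsto_eval_pi (fun l => weakBdd (r l) (L l)) l).eventually h1
    exact eventually_all.2 this
  let Γ := {p : Set (∀ l, X l) × (∀ l, X l) // p.1 ∈ f ∧ p.1 ⊆ s₀ ∧ p.2 ∈ p.1}
  let _ : Preorder Γ := Preorder.lift fun p : Γ => OrderDual.toDual p.1.1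
  have hle : ∀ p p' : Γ, p ≤ p' ↔ p'.1.1 ⊆ p.1.1 := fun p p' => Iff.rfl
  have hmk : ∀ s ∈ f, ∃ p : Γ, p.1.1 = s ∩ s₀ := fun s hs => by
    obtain ⟨a, ha⟩ := h0.nonempty_of_mem (inter_mem hs hs₀)
    exact ⟨⟨(s ∩ s₀, a), inter_mem hs hs₀, Set.inter_subset_right, ha⟩, rfl⟩
  have : IsDirected Γ (· ≤ ·) := ⟨fun p p' => by
    obtain ⟨c, hc⟩ := hmk (p.1.1 ∩ p'.1.1) (inter_mem p.2.1 p'.2.1)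
    refine ⟨c, (hle _ _).2 ?_, (hle _ _).2 ?_⟩
    · rw [hc]
      exact fun x hx => hx.1.1
    · rw [hc]
      exact fun x hx => hx.1.2⟩
  have : Nonempty Γ := ⟨(hmk _ univ_mem).choose⟩
  have hsnd : Tendsto (fun p : Γ => p.1.2) atTop f := by
    intro s hs
    obtain ⟨c, hc⟩ := hmk s hs
    refine mem_map.2 <| mem_of_superset (Ici_mem_atTop c) fun p hp => ?_
    have h1 := (hle _ _).1 (Set.mem_Ici.1 hp) p.2.2.2
    rw [hc] at h1
    exact h1.1
  have hweak : ∀ l (φ : X l →L[ℝ] ℝ), Tendsto (fun x : ∀ l, X l => φ (x l)) f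
      (𝓝 (φ (L l))) := by
    intro l φ
    have h1 : Tendsto (fun (y : X l) (φ : X l →L[ℝ] ℝ) => φ y) (weakBdd (r l) (L l))
        (𝓝 fun φ => φ (L l)) := tendsto_inf_left tendsto_comap
    exact (tendsto_pi_nhds.1 h1 φ).comp (tendsto_eval_pi _ l)
  have hnet := hA Γ (fun l p => p.1.2 l) L (fun l => ⟨r l, fun p => p.2.2.1 p.2.2.2 l⟩)
    (fun l φ => (hweak l φ).comp hsnd)
  intro U hU
  obtain ⟨c, hc⟩ := mem_atTop_sets.1 (hnet hU)
  refine mem_map.2 <| mem_of_superset c.2.1 fun a ha => ?_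
  exact hc ⟨(c.1.1, a), c.2.1, c.2.2.1, ha⟩ ((hle _ _).2 subset_rfl)

variable [NormedSpace ℝ Y]

/-- If slot `l` tends weakly to `0` and the variables in `T` range freely over unit balls, then `A`
tends to `0`, uniformly in the free variables. A free variable `x j` is written as
`(x j - y) + y`, with `y` in a finite set and `x j - y` in a prescribed weak neighbourhood of `0`;
this removes `j` from `T` in both resulting terms. -/
theorem tendsto_pi_zero (A : MultilinearMap ℝ X Y) (hA : WeaklyContOnBounded fun v => A v)
    (l : Fin k) (T : Finset (Fin k)) (hl : l ∉ T) (G : ∀ j, Filter (X j))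
    (hT : ∀ j ∈ T, G j = 𝓟 (Metric.closedBall 0 1))
    (hG : ∀ j, j ∉ T → ∃ r L, G j ≤ weakBdd r L) (hGl : ∃ r, G l ≤ weakBdd r 0) :
    Tendsto A (Filter.pi G) (𝓝 0) := by
  induction T using Finset.induction_on generalizing G with
  | empty =>
    have : ∀ j, ∃ r L, G j ≤ weakBdd r L ∧ (j = l → L = 0) := by
      intro j
      by_cases hj : j = l
      · subst hj
        obtain ⟨r, hr⟩ := hGl
        exact ⟨r, 0, hr, fun _ => rfl⟩
      · obtain ⟨r, L, h⟩ := hG j (by simp)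
        exact ⟨r, L, h, fun h => absurd h hj⟩
    choose r L h1 h2 using this
    have h3 := (hA.tendsto_pi r L).mono_left (Filter.pi_mono h1)
    rwa [A.map_coord_zero l (h2 l rfl)] at h3
  | insert j T hjT ih =>
    have hlj : l ≠ j := fun h => hl (h ▸ Finset.mem_insert_self _ _)
    have hlT : l ∉ T := fun h => hl (Finset.mem_insert_of_mem h)
    have hupd : ∀ (F : Filter (X j)), (∃ r L, F ≤ weakBdd r L) →
        Tendsto A (Filter.pi (Function.update G j F)) (𝓝 0) := by
      intro F hF
      refine ih hlT _ (fun i hi => ?_) (fun i hi => ?_) ?_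
      · rw [Function.update_of_ne (fun h : i = j => hjT (h ▸ hi))]
        exact hT i (Finset.mem_insert_of_mem hi)
      · by_cases hij : i = j
        · subst hij
          rw [Function.update_self]
          exact hF
        · rw [Function.update_of_ne hij]
          exact hG i (by simp [hij, hi])
      · rw [Function.update_of_ne hlj]
        exact hGl
    rw [Metric.tendsto_nhds]
    intro δ hδ
    have hA1 := (Metric.tendsto_nhds.1 (hupd (weakBdd (2 * 1) 0) ⟨_, _, le_rfl⟩)) (δ / 2)
      (by positivity)
    obtain ⟨I, hI, s, hs, hsub⟩ := Filter.mem_pi.1 hA1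
    have hsj := hs j
    rw [Function.update_self] at hsj
    obtain ⟨t, ht, hcov⟩ := exists_finite_cover hsj
    have hA2 : ∀ y ∈ t, ∀ᶠ x in Filter.pi G, ‖A (Function.update x j y)‖ < δ / 2 := by
      intro y _
      have h1 : Tendsto (fun x : ∀ i, X i => Function.update x j y) (Filter.pi G)
          (Filter.pi (Function.update G j (pure y))) := by
        rw [Filter.tendsto_pi]
        intro i
        by_cases hij : i = j
        · subst hij
          simp only [Function.update_self]
          exact tendsto_const_pure
        · simp only [Function.update_of_ne hij]
          exact tendsto_eval_pi _ i
      have h2 := hupd (pure y) ⟨‖y‖, y, by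
        refine le_inf ?_ ?_
        · rw [← tendsto_iff_comap]
          exact (tendsto_pure_nhds _ _)
        · simp⟩
      have h3 := (Metric.tendsto_nhds.1 (h2.comp h1)) (δ / 2) (by positivity)
      simpa using h3
    have hA2' : ∀ᶠ x in Filter.pi G, ∀ y ∈ t, ‖A (Function.update x j y)‖ < δ / 2 :=
      (eventually_all_finite ht).2 hA2
    have hA3 : ∀ᶠ x in Filter.pi G, ∀ i, i ≠ j → x i ∈ s i := by
      refine eventually_all.2 fun i => ?_
      by_cases hij : i = j
      · simp [hij]
      · have h1 := hs i
        rw [Function.update_of_ne hij] at h1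
        filter_upwards [(tendsto_eval_pi G i).eventually h1] with x hx _
        exact hx
    have hA4 : ∀ᶠ x in Filter.pi G, ‖x j‖ ≤ 1 := by
      have h1 : ∀ᶠ z in G j, ‖z‖ ≤ 1 := by
        rw [hT j (Finset.mem_insert_self _ _)]
        simp
      exact (tendsto_eval_pi G j).eventually h1
    filter_upwards [hA2', hA3, hA4] with x h2 h3 h4
    obtain ⟨y, hy, hxy⟩ := hcov (x j) h4
    have h5 : A x = A (Function.update x j (x j - y)) + A (Function.update x j y) := by
      rw [← A.map_update_add, sub_add_cancel, Function.update_eq_self]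
    have h6 : ‖A (Function.update x j (x j - y))‖ < δ / 2 := by
      have : Function.update x j (x j - y) ∈ I.pi s := by
        intro i _
        by_cases hij : i = j
        · subst hij
          rw [Function.update_self]
          exact hxy
        · rw [Function.update_of_ne hij]
          exact h3 i hij
      have := hsub this
      simpa using this
    rw [dist_zero_right, h5]
    have := norm_add_le (A (Function.update x j (x j - y))) (A (Function.update x j y))
    have := h2 y hy
    linarith

theorem WeaklyContOnBounded.compactSlice (A : MultilinearMap ℝ X Y)
    (hA : WeaklyContOnBounded fun v => A v) (l : Fin k) :
    CompactSlice A (fun j => normSeminorm ℝ (X j)) l := by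
  intro δ hδ
  let G : ∀ j, Filter (X j) :=
    Function.update (fun j => 𝓟 (Metric.closedBall 0 1)) l (weakBdd (2 * 1) 0)
  have h := tendsto_pi_zero A hA l (Finset.univ.erase l) (by simp) G
    (fun j hj => by simp [G, Function.update_of_ne (Finset.ne_of_mem_erase hj)])
    (fun j hj => by
      obtain rfl : j = l := by simpa using hj
      exact ⟨2 * 1, 0, by simp [G]⟩)
    ⟨2 * 1, by simp [G]⟩
  obtain ⟨I, hI, s, hs, hsub⟩ := Filter.mem_pi.1 (Metric.tendsto_nhds.1 h δ hδ)
  have hsl := hs l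
  simp only [G, Function.update_self] at hsl
  obtain ⟨t, ht, hcov⟩ := exists_finite_cover hsl
  refine ⟨t, ht, fun x hx => ?_⟩
  obtain ⟨y, hy, hxy⟩ := hcov x (le_of_lt hx)
  refine ⟨y, hy, fun m hm => ?_⟩
  have : Function.update m l (x - y) ∈ I.pi s := by
    intro i _
    by_cases hil : i = l
    · subst hil
      rw [Function.update_self]
      exact hxy
    · rw [Function.update_of_ne hil]
      have h1 := hs i
      simp only [G, Function.update_of_ne hil, mem_principal] at h1
      exact h1 (mem_closedBall_zero_iff.2 (hm i hil).le)
  have h2 := hsub this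
  simp only [Set.mem_ofPred_eq, dist_zero_right] at h2
  exact h2.le

/-- Converse: compact slices give weak continuity on bounded sets, by changing one variable at a
time. In each slot the slice seminorm `p` is almost attained by functionals dominated by `p`, so
weak convergence and relative compactness give convergence for `p`. -/
theorem weaklyContOnBounded_of_compactSlice (B : ContinuousMultilinearMap ℝ X Y)
    (hB : ∀ l, CompactSlice B.toMultilinearMap (fun j => normSeminorm ℝ (X j)) l) :
    WeaklyContOnBounded fun v => B v := by
  intro Γ _ _ _ z L hbd hweak
  choose C hC using hbd
  obtain ⟨D, hD0, hDz, hDL⟩ : ∃ D : ℝ, 0 < D ∧ (∀ l α, ‖z l α‖ < D) ∧ ∀ l, ‖L l‖ < D := by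
    obtain ⟨D, hD⟩ := (Set.finite_range fun l => max (C l) ‖L l‖).bddAbove
    refine ⟨max D 0 + 1, by positivity, fun l α => ?_, fun l => ?_⟩
    · have h1 := hD ⟨l, rfl⟩
      have h2 := le_max_left D 0
      have h3 := le_max_left (C l) ‖L l‖
      have := hC l α
      simp only at h1
      linarith
    · have h1 := hD ⟨l, rfl⟩
      have h2 := le_max_left D 0
      have h3 := le_max_right (C l) ‖L l‖
      simp only at h1
      linarith
  have hM : ∀ m : ∀ l, X l, (∀ j, normSeminorm ℝ (X j) (m j) < 1) →
      ‖B.toMultilinearMap m‖ ≤ ‖B‖ := fun m hm =>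
    B.unit_le_opNorm ((pi_norm_le_iff_of_nonneg zero_le_one).2 fun j => (hm j).le)
  have key : ∀ l, ∃ p : Seminorm ℝ (X l),
      (∀ x m, (∀ j, j ≠ l → ‖m j‖ < 1) → ‖B (Function.update m l x)‖ ≤ p x) ∧
      Tendsto (fun α => p (z l α - L l)) atTop (𝓝 0) := by
    intro l
    obtain ⟨p, hp1, hp2⟩ := exists_slice_seminorm B.toMultilinearMap _ hM l
    refine ⟨p, hp1, ?_⟩
    have hcp : CompactRel (normSeminorm ℝ (X l)) p := by
      intro δ hδ
      obtain ⟨t, ht, h⟩ := hB l δ hδ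
      refine ⟨t, ht, fun x hx => ?_⟩
      obtain ⟨y, hy, hxy⟩ := h x hx
      exact ⟨y, hy, hp2 _ _ hxy⟩
    have hfun : ∀ δ : ℝ, 0 < δ → ∀ y, ∃ φ : X l →L[ℝ] ℝ, (∀ x, |φ x| ≤ p x) ∧
        p y - δ ≤ φ y := by
      intro δ hδ y
      by_contra! hcon
      have hle : p y ≤ p y - δ := by
        refine hp2 y _ fun m hm => ?_
        obtain ⟨g, hg1, hg2⟩ := exists_dual_vector'' ℝ (B (Function.update m l y))
        have h1 := hcon (g.comp (B.toContinuousLinearMap m l)) (fun x => by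
          have h2 := g.le_opNorm (B (Function.update m l x))
          have h3 := hp1 x m hm
          have h4 := norm_nonneg (B (Function.update m l x))
          have h5 : ‖g (B (Function.update m l x))‖ ≤ p x := by
            refine h2.trans (le_trans ?_ h3)
            exact mul_le_of_le_one_left h4 hg1
          exact h5)
        have h6 : (g.comp (B.toContinuousLinearMap m l)) y = ‖B (Function.update m l y)‖ := hg2
        rw [h6] at h1
        exact h1.le
      linarith
    rw [Metric.tendsto_nhds]
    intro δ hδ
    obtain ⟨t, ht, hcov⟩ := hcp.cover (R := 2 * D) (δ := δ / 5) (by positivity) (by positivity)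
    choose φ hφ1 hφ2 using hfun (δ / 5) (by positivity)
    have hev : ∀ᶠ α in atTop, ∀ y ∈ t, |φ y (z l α - L l)| < δ / 5 := by
      refine (eventually_all_finite ht).2 fun y _ => ?_
      have h1 := Metric.tendsto_nhds.1 (hweak l (φ y)) (δ / 5) (by positivity)
      filter_upwards [h1] with α h2
      rwa [Real.dist_eq, ← map_sub] at h2
    filter_upwards [hev] with α hα
    have hz2 : ‖z l α - L l‖ < 2 * D := by
      have := norm_sub_le (z l α) (L l)
      have := hDz l α
      have := hDL l
      linarith
    obtain ⟨y, hy, hxy⟩ := hcov _ hz2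
    set w := z l α - L l
    have h1 := hα y hy
    have h2 := hφ2 y
    have h3 := hφ1 y (w - y)
    rw [map_sub] at h3
    have h4 := abs_lt.1 h1
    have h5 := abs_le.1 h3
    have h6 := map_add_le_add p y (w - y)
    rw [add_sub_cancel] at h6
    rw [Real.dist_eq, sub_zero, abs_of_nonneg (apply_nonneg p w)]
    linarith
  suffices H : ∀ s : Finset (Fin k),
      Tendsto (fun α => B (s.piecewise (fun l => z l α) L)) atTop (𝓝 (B L)) by
    simpa using H Finset.univ
  intro s
  induction s using Finset.induction_on with
  | empty => simp
  | insert l s hls ih =>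
    obtain ⟨p, hp1, hp2⟩ := key l
    have hsplit : ∀ α, B ((insert l s).piecewise (fun l => z l α) L) =
        B (s.piecewise (fun l => z l α) L) +
        B (Function.update (s.piecewise (fun l => z l α) L) l (z l α - L l)) := by
      intro α
      rw [Finset.piecewise_insert]
      have h1 : s.piecewise (fun l => z l α) L =
          Function.update (s.piecewise (fun l => z l α) L) l (L l) := by
        rw [eq_comm, Function.update_eq_self_iff]
        simp [hls]
      conv_rhs => enter [1]; rw [h1]
      rw [← B.map_update_add, add_sub_cancel]
    simp only [hsplit]
    rw [← add_zero (B L)]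
    refine ih.add ?_
    have hzero : Tendsto (fun α => D ^ k * (D⁻¹ * p (z l α - L l))) atTop (𝓝 0) := by
      simpa using (hp2.const_mul D⁻¹).const_mul (D ^ k)
    refine squeeze_zero_norm (fun α => ?_) hzero
    set m := s.piecewise (fun l => z l α) L with hm
    have hmD : ∀ j, ‖m j‖ < D := fun j => by
      by_cases hj : j ∈ s
      · simpa [hm, hj] using hDz j α
      · simpa [hm, hj] using hDL j
    have h1 : Function.update m l (z l α - L l) = fun j => D •
        (Function.update (fun i => D⁻¹ • m i) l (D⁻¹ • (z l α - L l))) j := by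
      funext j
      by_cases hj : j = l
      · subst hj
        simp [smul_smul, hD0.ne']
      · simp [Function.update_of_ne hj, smul_smul, hD0.ne']
    rw [h1, B.map_smul_univ (fun _ => D)]
    simp only [Finset.prod_const, Finset.card_univ, Fintype.card_fin]
    rw [norm_smul, norm_pow, Real.norm_eq_abs, abs_of_pos hD0]
    gcongr
    refine (hp1 _ _ fun j _ => ?_).trans_eq ?_
    · rw [norm_smul, Real.norm_eq_abs, abs_of_pos (inv_pos.2 hD0), inv_mul_lt_iff₀ hD0, mul_one]
      exact hmD j
    · rw [map_smul_eq_mul, Real.norm_eq_abs, abs_of_pos (inv_pos.2 hD0)]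

end Weak

/-! ### Completions with respect to seminorms -/

section Completion

open UniformSpace

/-- A continuous multilinear map extends to the completions of its domains with the same bound:
it is Lipschitz on bounded sets, hence has limits along the traces of neighbourhoods, and the
algebraic identities pass to the extension by density. -/
theorem exists_completion_extension {k : ℕ} {X : Fin k → Type u} {Y : Type u}
    [∀ l, SeminormedAddCommGroup (X l)] [∀ l, NormedSpace ℝ (X l)]
    [NormedAddCommGroup Y] [NormedSpace ℝ Y] [CompleteSpace Y]
    (A : ContinuousMultilinearMap ℝ X Y) :
    ∃ B : ContinuousMultilinearMap ℝ (fun l => Completion (X l)) Y,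
      (∀ x : ∀ l, X l, B (fun l => (x l : Completion (X l))) = A x) ∧ ‖B‖ ≤ ‖A‖ := by
  let i : (∀ l, X l) → ∀ l, Completion (X l) := Pi.map fun l (x : X l) => (x : Completion (X l))
  have hiso : Isometry i := Isometry.piMap _ fun l => Completion.coe_isometry
  have hdense : DenseRange i := DenseRange.piMap fun l => Completion.denseRange_coe
  have di : IsDenseInducing i := ⟨hiso.isUniformInducing.isInducing, hdense⟩
  have hlim : ∀ b, ∃ c, Tendsto A (comap i (𝓝 b)) (𝓝 c) := by
    intro b
    have hne : (comap i (𝓝 b)).NeBot := di.comap_nhds_neBot b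
    have hcau : Cauchy (comap i (𝓝 b)) :=
      cauchy_nhds.comap hiso.isUniformInducing.comap_uniformity.le
    let R := ‖b‖ + 1
    have hball : comap i (𝓝 b) ≤ 𝓟 (Metric.ball 0 R) := by
      rw [le_principal_iff]
      refine ⟨Metric.ball 0 R, Metric.isOpen_ball.mem_nhds ?_, fun x hx => ?_⟩
      · rw [mem_ball_zero_iff]
        exact lt_add_one _
      · have h1 : ‖i x‖ < R := mem_ball_zero_iff.1 hx
        have h2 : i 0 = 0 := by
          funext l
          exact Completion.coe_zero
        have h3 := hiso.dist_eq x 0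
        rw [h2, dist_zero_right, dist_zero_right] at h3
        rw [mem_ball_zero_iff, ← h3]
        exact h1
    have hunif : UniformContinuousOn A (Metric.ball 0 R) := by
      refine (LipschitzOnWith.of_dist_le_mul
        (K := (‖A‖ * Fintype.card (Fin k) * R ^ (Fintype.card (Fin k) - 1)).toNNReal)
        fun x hx y hy => ?_).uniformContinuousOn
      rw [dist_eq_norm, dist_eq_norm, Real.coe_toNNReal _ (by positivity)]
      refine (A.norm_image_sub_le x y).trans ?_
      gcongr
      exact max_le (mem_ball_zero_iff.1 hx).le (mem_ball_zero_iff.1 hy).le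
    exact cauchy_map_iff_exists_tendsto.1 (hcau.map_of_le hunif hball)
  obtain ⟨g, hg, hgi⟩ : ∃ g : (∀ l, Completion (X l)) → Y, Continuous g ∧ ∀ x, g (i x) = A x :=
    ⟨di.extend A, di.continuous_extend hlim, fun x => di.extend_eq' hlim x⟩
  have hup : ∀ (m : ∀ l, X l) (j : Fin k) (x : X j),
      i (Function.update m j x) = Function.update (i m) j (x : Completion (X j)) := by
    intro m j x
    funext l
    by_cases hl : l = j
    · subst hl
      simp [i]
    · simp [i, Function.update_of_ne hl]
  let B₀ : MultilinearMap ℝ (fun l => Completion (X l)) Y :=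
    { toFun := g
      map_update_add' := by
        intro inst m j x y
        obtain rfl : inst = instDecidableEqFin k := Subsingleton.elim _ _
        have hd : DenseRange (Prod.map i (Prod.map (fun x : X j => (x : Completion (X j)))
            (fun x : X j => (x : Completion (X j))))) :=
          hdense.prodMap (Completion.denseRange_coe.prodMap Completion.denseRange_coe)
        have := hd.equalizer
          (g := fun w : (∀ l, Completion (X l)) × Completion (X j) × Completion (X j) =>
            g (Function.update w.1 j (w.2.1 + w.2.2)))
          (h := fun w => g (Function.update w.1 j w.2.1) + g (Function.update w.1 j w.2.2))
          (by fun_prop) (by fun_prop) (by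
            funext ⟨m, x, y⟩
            simp only [Function.comp, Prod.map]
            rw [← Completion.coe_add, ← hup, ← hup, ← hup, hgi, hgi, hgi, A.map_update_add])
        exact congrFun this (m, x, y)
      map_update_smul' := by
        intro inst m j c x
        obtain rfl : inst = instDecidableEqFin k := Subsingleton.elim _ _
        have hd : DenseRange (Prod.map i (fun x : X j => (x : Completion (X j)))) :=
          hdense.prodMap Completion.denseRange_coe
        have := hd.equalizer
          (g := fun w : (∀ l, Completion (X l)) × Completion (X j) =>
            g (Function.update w.1 j (c • w.2)))
          (h := fun w => c • g (Function.update w.1 j w.2))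
          (hg.comp (continuous_fst.update j (continuous_snd.const_smul c)))
          ((hg.comp (continuous_fst.update j continuous_snd)).const_smul c) (by
            funext ⟨m, x⟩
            simp only [Function.comp, Prod.map]
            rw [← Completion.coe_smul, ← hup, ← hup, hgi, hgi, A.map_update_smul])
        exact congrFun this (m, x) }
  have hbound : ∀ z : ∀ l, Completion (X l), ‖g z‖ ≤ ‖A‖ * ∏ l, ‖z l‖ := by
    intro z
    refine hdense.induction_on z (isClosed_le hg.norm (by fun_prop)) fun x => ?_
    rw [hgi]
    refine (A.le_opNorm x).trans_eq ?_
    simp [i]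
  exact ⟨B₀.mkContinuous ‖A‖ hbound, hgi, B₀.mkContinuous_norm_le (norm_nonneg A) hbound⟩

/-- The vector space `E` regarded as a seminormed space with `‖x‖ = q x`. It is a type synonym, so
that it does not clash with a norm that `E` may already carry. -/
def SeminormSpace {E : Type u} [AddCommGroup E] [Module ℝ E] (_q : Seminorm ℝ E) : Type u := E

variable {E : Type u} [AddCommGroup E] [Module ℝ E] (q : Seminorm ℝ E)

noncomputable instance : SeminormedAddCommGroup (SeminormSpace q) :=
  q.toAddGroupSeminorm.toSeminormedAddCommGroup

instance : Module ℝ (SeminormSpace q) := inferInstanceAs (Module ℝ E)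

instance : NormedSpace ℝ (SeminormSpace q) where
  norm_smul_le c x := (map_smul_eq_mul q c x).le

/-- The canonical linear map from `E` to the Hausdorff completion of `E` for the seminorm `q`. -/
noncomputable def Seminorm.toCompletion : E →ₗ[ℝ] Completion (SeminormSpace q) :=
  (Completion.toComplL (𝕜 := ℝ) (E := SeminormSpace q)).toLinearMap.comp
    (LinearMap.id : E →ₗ[ℝ] E)

theorem Seminorm.norm_toCompletion (x : E) : ‖q.toCompletion x‖ = q x :=
  Completion.norm_coe (E := SeminormSpace q) x

theorem Seminorm.denseRange_toCompletion : DenseRange q.toCompletion :=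
  Completion.denseRange_coe (α := SeminormSpace q)

theorem isCompactOperator_of_compactRel {F : Type u} [NormedAddCommGroup F] [NormedSpace ℝ F]
    (q : Seminorm ℝ F) (h : CompactRel (normSeminorm ℝ F) q)
    (S : F →L[ℝ] Completion (SeminormSpace q)) (hS : ∀ x, S x = q.toCompletion x) :
    IsCompactOperator S := by
  refine ⟨closure (S '' Metric.ball 0 1), ?_, ?_⟩
  · refine TotallyBounded.isCompact_of_isClosed (TotallyBounded.closure ?_) isClosed_closure
    rw [Metric.totallyBounded_iff]
    intro δ hδ
    obtain ⟨t, ht, hcov⟩ := h (δ / 2) (by positivity)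
    refine ⟨S '' t, ht.image S, ?_⟩
    rintro _ ⟨x, hx, rfl⟩
    obtain ⟨y, hy, hxy⟩ := hcov x (mem_ball_zero_iff.1 hx)
    refine Set.mem_biUnion ⟨y, hy, rfl⟩ ?_
    rw [Metric.mem_ball, dist_eq_norm, ← map_sub, hS, Seminorm.norm_toCompletion]
    linarith
  · exact mem_of_superset (Metric.ball_mem_nhds 0 one_pos)
      fun x hx => subset_closure ⟨x, hx, rfl⟩

/-- Compactness of the slices passes from `A`, measured by the seminorms `q`, to its extension `B`
to the completions. Open balls are used in `CompactSlice` so that points of the unit balls of the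
completions are limits of points of the unit balls of the `q l`. -/
theorem compactSlice_completion {k : ℕ} {X : Fin k → Type u} {Y : Type u}
    [∀ l, AddCommGroup (X l)] [∀ l, Module ℝ (X l)]
    [NormedAddCommGroup Y] [NormedSpace ℝ Y]
    (A : MultilinearMap ℝ X Y) (q : ∀ l, Seminorm ℝ (X l))
    (B : ContinuousMultilinearMap ℝ (fun l => Completion (SeminormSpace (q l))) Y)
    (hAB : ∀ x : ∀ l, X l, B (fun l => (q l).toCompletion (x l)) = A x) (l : Fin k)
    (hA : CompactSlice A q l) :
    CompactSlice B.toMultilinearMap (fun _ => normSeminorm ℝ _) l := by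
  intro δ hδ
  obtain ⟨t, ht, hcov⟩ := hA (δ / 2) (by positivity)
  refine ⟨(q l).toCompletion '' t, ht.image _, fun z hz => ?_⟩
  replace hz : ‖z‖ < 1 := hz
  let η := δ / 2 / (‖B‖ + 1)
  have hη : 0 < η := by positivity
  obtain ⟨x, hx⟩ := (q l).denseRange_toCompletion.exists_mem_open
    (Metric.isOpen_ball.inter Metric.isOpen_ball)
    (⟨z, mem_ball_zero_iff.2 hz, Metric.mem_ball_self hη⟩ :
      (Metric.ball (0 : Completion (SeminormSpace (q l))) 1 ∩ Metric.ball z η).Nonempty)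
  obtain ⟨hx1, hx2⟩ := hx
  rw [mem_ball_zero_iff, Seminorm.norm_toCompletion] at hx1
  rw [Metric.mem_ball, dist_comm, dist_eq_norm] at hx2
  obtain ⟨y, hy, hxy⟩ := hcov x hx1
  refine ⟨_, ⟨y, hy, rfl⟩, fun m hm => ?_⟩
  replace hm : ∀ j, j ≠ l → ‖m j‖ < 1 := hm
  have hM : ∀ m : ∀ l, Completion (SeminormSpace (q l)), (∀ j, normSeminorm ℝ _ (m j) < 1) →
      ‖B.toMultilinearMap m‖ ≤ ‖B‖ := fun m hm =>
    B.unit_le_opNorm ((pi_norm_le_iff_of_nonneg zero_le_one).2 fun j => (hm j).le)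
  have h1 : ‖B (Function.update m l (z - (q l).toCompletion x))‖ ≤ δ / 2 := by
    have h2 : ‖B (Function.update m l (z - (q l).toCompletion x))‖ ≤
        ‖B‖ * ‖z - (q l).toCompletion x‖ :=
      bound_update B.toMultilinearMap (fun j => normSeminorm ℝ _) hM l _ m hm
    refine h2.trans ?_
    calc ‖B‖ * ‖z - (q l).toCompletion x‖ ≤ (‖B‖ + 1) * η := by
          gcongr
          linarith
      _ = δ / 2 := by
          simp only [η]
          field_simp
  have h2 : ‖B (Function.update m l ((q l).toCompletion (x - y)))‖ ≤ δ / 2 := by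
    let U : Set (∀ l, Completion (SeminormSpace (q l))) :=
      ⋂ j ∈ {j | j ≠ l}, {m | ‖m j‖ < 1}
    have hU : IsOpen U := (Set.toFinite _).isOpen_biInter fun j _ =>
      isOpen_lt (by fun_prop) continuous_const
    have hmU : m ∈ U := Set.mem_iInter₂.2 hm
    have hd : DenseRange (Pi.map fun l => (q l).toCompletion) :=
      DenseRange.piMap fun l => (q l).denseRange_toCompletion
    have hcl : IsClosed {m : ∀ l, Completion (SeminormSpace (q l)) |
        ‖B (Function.update m l ((q l).toCompletion (x - y)))‖ ≤ δ / 2} :=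
      isClosed_le (by fun_prop) continuous_const
    refine hcl.closure_subset_iff.2 ?_ (hd.open_subset_closure_inter hU hmU)
    rintro _ ⟨hm', ⟨m', rfl⟩⟩
    have h3 := hxy m' fun j hj => by
      have := Set.mem_iInter₂.1 hm' j hj
      rw [← Seminorm.norm_toCompletion]
      exact this
    rw [← hAB] at h3
    have h4 : Function.update (Pi.map (fun l => (q l).toCompletion) m') l
        ((q l).toCompletion (x - y)) =
        fun j => (q j).toCompletion (Function.update m' l (x - y) j) := by
      funext j
      by_cases hj : j = l
      · subst hj
        simp
      · simp [Function.update_of_ne hj]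
    rw [← h4] at h3
    exact h3
  have h3 : B (Function.update m l (z - (q l).toCompletion y)) =
      B (Function.update m l (z - (q l).toCompletion x)) +
      B (Function.update m l ((q l).toCompletion (x - y))) := by
    rw [← B.map_update_add, map_sub, sub_add_sub_cancel]
  change ‖B (Function.update m l (z - (q l).toCompletion y))‖ ≤ δ
  rw [h3]
  have := norm_add_le (B (Function.update m l (z - (q l).toCompletion x)))
    (B (Function.update m l ((q l).toCompletion (x - y))))
  linarith

end Completion

/-- Theorem (González–Gutiérrez). Every continuous `k`-linear map `A` between Banach spaces
which is weakly continuous on bounded sets factors as `A = B ∘ (S₁, …, S_k)` with the `S_i`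
compact operators and `B` a `k`-linear map weakly continuous on bounded sets, with
`‖B‖ ‖S₁‖ ⋯ ‖S_k‖ ≤ (1 + ε) ‖A‖`. -/
theorem weaklyContOnBounded_multilinear_factorization {k : ℕ} {X : Fin k → Type u} {Y : Type u}
    [∀ l, NormedAddCommGroup (X l)] [∀ l, NormedSpace ℝ (X l)] [∀ l, CompleteSpace (X l)]
    [NormedAddCommGroup Y] [NormedSpace ℝ Y] [CompleteSpace Y]
    {ε : ℝ} (hε : 0 < ε)
    (A : ContinuousMultilinearMap ℝ X Y) (hA : WeaklyContOnBounded (fun v => A v)) :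
    ∃ (Z : Fin k → Type u) (_ : ∀ l, NormedAddCommGroup (Z l))
      (_ : ∀ l, NormedSpace ℝ (Z l)) (_ : ∀ l, CompleteSpace (Z l))
      (S : ∀ l, X l →L[ℝ] Z l), (∀ l, IsCompactOperator (S l)) ∧
        ∃ B : ContinuousMultilinearMap ℝ Z Y,
          WeaklyContOnBounded (fun v => B v) ∧
          (∀ x : ∀ l, X l, A x = B fun l => S l (x l)) ∧
          ‖B‖ * ∏ l, ‖S l‖ ≤ (1 + ε) * ‖A‖ := by
  by_cases hA0 : A = 0
  · refine ⟨fun _ => PUnit, fun _ => inferInstance, fun _ => inferInstance,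
      fun _ => inferInstance, fun _ => 0, fun l => isCompactOperator_zero, 0, ?_, ?_, ?_⟩
    · intro Γ _ _ _ x L _ _
      simp
    · intro x
      simp [hA0]
    · simp [hA0]
  have hM0 : 0 < ‖A‖ := norm_pos_iff.2 hA0
  have hM : ∀ m : ∀ l, X l, (∀ j, normSeminorm ℝ (X j) (m j) < 1) →
      ‖A.toMultilinearMap m‖ ≤ ‖A‖ := fun m hm =>
    A.unit_le_opNorm ((pi_norm_le_iff_of_nonneg zero_le_one).2 fun j => (hm j).le)
  obtain ⟨q, hq1, hq2, hq3, hq4⟩ := exists_compact_family A.toMultilinearMap _ hM0 hM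
    fun l => WeaklyContOnBounded.compactSlice A.toMultilinearMap hA l
  -- The same multilinear map, continuous for the seminorms `q l`.
  let A₀ : MultilinearMap ℝ (fun l => SeminormSpace (q l)) Y :=
    { toFun := A
      map_update_add' := fun m i x y => A.toMultilinearMap.map_update_add' m i x y
      map_update_smul' := fun m i c x => A.toMultilinearMap.map_update_smul' m i c x }
  have hA₀ : ∀ x, ‖A₀ x‖ ≤ ‖A‖ * ∏ l, ‖x l‖ :=
    bound_of_unit_balls A.toMultilinearMap q hq3
  obtain ⟨B, hB1, hB2⟩ := exists_completion_extension (A₀.mkContinuous ‖A‖ hA₀)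
  have hB3 : ‖B‖ ≤ ‖A‖ := hB2.trans (A₀.mkContinuous_norm_le (norm_nonneg A) hA₀)
  have hAB : ∀ x : ∀ l, X l, B (fun l => (q l).toCompletion (x l)) = A x := fun x => hB1 x
  let S : ∀ l, X l →L[ℝ] UniformSpace.Completion (SeminormSpace (q l)) := fun l =>
    (q l).toCompletion.mkContinuous 1 fun x => by
      rw [Seminorm.norm_toCompletion, one_mul]
      exact hq1 l x
  refine ⟨fun l => UniformSpace.Completion (SeminormSpace (q l)), fun l => inferInstance,
    fun l => inferInstance, fun l => inferInstance, S,
    fun l => isCompactOperator_of_compactRel (q l) (hq2 l) (S l) fun x => rfl, B, ?_, ?_, ?_⟩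
  · exact weaklyContOnBounded_of_compactSlice B fun l =>
      compactSlice_completion A.toMultilinearMap q B hAB l (hq4 l)
  · exact fun x => (hAB x).symm
  · have hS : ∏ l, ‖S l‖ ≤ 1 := Finset.prod_le_one (fun l _ => norm_nonneg _) fun l _ =>
      LinearMap.mkContinuous_norm_le _ zero_le_one _
    calc ‖B‖ * ∏ l, ‖S l‖ ≤ ‖A‖ * 1 := by gcongr
      _ ≤ (1 + ε) * ‖A‖ := by nlinarith
end

section
/- Let X, Y be Banach spaces, ε > 0, and P : X → Y a continuous k-homogeneous polynomial with associated symmetric k-linear map P̂. Then P is weakly continuous on bounded sets if and only if there exist a Banach space Z, a compact operator S : X → Z, and a continuous k-homogeneous polynomial Q : Z → Y that is weakly continuous on bounded sets, such that P = Q ∘ S. Moreover, Z, S, Q can be chosen so that ‖Q‖·‖S‖^k ≤ (1+ε)‖P̂‖. -/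
/-!
If `P = Q ∘ S` with `Q` weakly continuous on bounded sets, then so is `P`, because an operator is
weak-to-weak continuous. The other implication is an interpolation argument.

Let `A` be the symmetric `k`-linear map of `P`, with `k = n + 1` and `A ≠ 0`. By polarization, `A` is
jointly weakly continuous on bounded sets. Balls are weakly precompact, so the variables other than
the first can be released one at a time (`tendsto_free`): as `x` tends weakly to `0` in a ball,
`A (x, x₂, …, x_k)` tends to `0` uniformly for `x₂, …, x_k` in a ball. Hence the operator
`T x = ‖A‖⁻¹ A (x, ·, …, ·)` is compact (`isCompactOperator_curryLeft`), and `‖T x‖ ≤ ‖x‖`.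

Let `G m = {x | ‖T x‖ ‖x‖ ^ m ≤ 1}` (`gauged`), which contains the unit ball, and let `q m` be the
largest seminorm that is at most `1` on `G m` (`hullSeminorm`). By symmetry the variable of largest
norm may be put in the first slot, so `‖A x‖ ≤ ‖A‖` when all `x i` lie in `G n`; by multilinearity
`‖A x‖ ≤ ‖A‖ ∏ q n (x i)` for all `x`. Thus `A` extends, with norm at most `‖A‖`, to the completion
`Z₂` of `(X, q n)`. Let `Z₁` be the completion of `(X, q (n + 1))`. Since `q n ≤ q (n + 1) ≤ ‖·‖`,
there are canonical operators `S₁ : X → Z₁` and `S₂ : Z₁ → Z₂` of norm at most `1`.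

Both are compact. On bounded sets `q m` is small where `T` is small, so compactness of `T` makes the
unit ball of `X` precompact for every `q m`. An element of `G (n + 1)` either has norm at most `r` or
lies in `t • G n`, where `t` is small when `r` is large; so the unit ball of `q (n + 1)` is, up to
`q n`-small vectors, contained in a ball of `X` (`exists_split`), and is precompact for `q n`.

Finally `P = Q ∘ S₁`, where `Q` is the polynomial of the extension of `A` composed with `S₂`. It is
weakly continuous on bounded sets since `S₂` is compact, and `‖Q‖ ‖S₁‖ ^ k ≤ ‖A‖`.
-/

open Filter Topology

universe u

/-- A mapping `f` between a Banach space and a normed space is weakly continuous on bounded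
sets if for every norm-bounded net `(x_α)` converging weakly to `x`, the net `(f x_α)`
converges in norm to `f x`. -/
def WeaklyContOnBoundedMap {X Y : Type u}
    [NormedAddCommGroup X] [NormedSpace ℝ X] [SeminormedAddCommGroup Y]
    (f : X → Y) : Prop :=
  ∀ (Γ : Type u) [Preorder Γ] [IsDirected Γ (· ≤ ·)] [Nonempty Γ],
    ∀ (x : Γ → X) (L : X),
      (∃ C : ℝ, ∀ α, ‖x α‖ ≤ C) →
      (∀ φ : X →L[ℝ] ℝ, Tendsto (fun α => φ (x α)) atTop (𝓝 (φ L))) →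
      Tendsto (fun α => f (x α)) atTop (𝓝 (f L))

namespace WeakFactor

/-! ### Polarization -/

section Polarization

/-- The polarization identity for a symmetric multilinear map, in the form indexed by the
complement `t` of the set of summed variables. -/
theorem polarization {k : ℕ} {X Y : Type*} [AddCommGroup X] [Module ℝ X]
    [AddCommGroup Y] [Module ℝ Y] (A : MultilinearMap ℝ (fun _ : Fin k => X) Y)
    (hsym : ∀ (σ : Equiv.Perm (Fin k)) (x : Fin k → X), A (x ∘ σ) = A x) (x : Fin k → X) :
    ∑ t : Finset (Fin k), (-1 : ℤ) ^ t.card • A (fun _ => ∑ i ∈ tᶜ, x i) =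
      (k.factorial : ℤ) • A x := by
  have h1 : ∀ t : Finset (Fin k), (-1 : ℤ) ^ t.card • A (fun _ => ∑ i ∈ tᶜ, x i) =
      ∑ f : Fin k → Fin k, if t ⊆ (Finset.univ.image f)ᶜ then
        (-1 : ℤ) ^ t.card • A (x ∘ f) else 0 := by
    intro t
    rw [A.map_sum_finset (fun _ i => x i) (fun _ => tᶜ), Finset.smul_sum, ← Finset.sum_filter]
    refine Finset.sum_congr ?_ fun f _ => rfl
    ext f
    simp only [Fintype.mem_piFinset, Finset.mem_compl, Finset.mem_filter, Finset.mem_univ,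
      true_and, Finset.subset_iff, Finset.mem_image]
    grind
  rw [Finset.sum_congr rfl fun t _ => h1 t, Finset.sum_comm]
  have h2 : ∀ f : Fin k → Fin k, (∑ t : Finset (Fin k),
      if t ⊆ (Finset.univ.image f)ᶜ then (-1 : ℤ) ^ t.card • A (x ∘ f) else 0) =
      if Function.Bijective f then A x else 0 := by
    intro f
    rw [← Finset.sum_filter, ← Finset.sum_smul]
    have : (Finset.univ.filter fun t : Finset (Fin k) => t ⊆ (Finset.univ.image f)ᶜ) =
        ((Finset.univ.image f)ᶜ).powerset := by ext; simp
    rw [this, Finset.sum_powerset_neg_one_pow_card]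
    have h3 : (Finset.univ.image f)ᶜ = ∅ ↔ Function.Bijective f := by
      rw [Finset.compl_eq_empty_iff, ← Finset.coe_eq_univ, Finset.coe_image, Finset.coe_univ,
        Set.image_univ, Set.range_eq_univ, Finite.surjective_iff_bijective]
    by_cases hf : Function.Bijective f
    · rw [if_pos (h3.2 hf), if_pos hf, one_smul]
      exact hsym (Equiv.ofBijective f hf) x
    · rw [if_neg (fun h => hf (h3.1 h)), if_neg hf, zero_smul]
  rw [Finset.sum_congr rfl fun f _ => h2 f, ← Finset.sum_filter, Finset.sum_const]
  have h4 : (Finset.univ.filter fun f : Fin k → Fin k => Function.Bijective f).card =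
      k.factorial := by
    rw [← Fintype.card_subtype, ← Fintype.card_congr (Equiv.ofBijective
      (fun e : Equiv.Perm (Fin k) => (⟨e, e.bijective⟩ : {f : Fin k → Fin k //
        Function.Bijective f})) ⟨fun a b h => by
          ext i; simpa using congrArg (fun g => (g.1 i : ℕ)) h, fun f =>
          ⟨Equiv.ofBijective f.1 f.2, rfl⟩⟩), Fintype.card_perm, Fintype.card_fin]
  rw [h4, natCast_zsmul]

end Polarization

/-! ### Weak continuity on bounded sets and compactness -/

section WeakFilter

variable {X Y : Type u} [NormedAddCommGroup X] [NormedSpace ℝ X]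
  [NormedAddCommGroup Y] [NormedSpace ℝ Y]

/-- The trace on the closed ball of radius `R` of the filter of weak neighbourhoods of `a`; the
weak topology is the one induced by evaluation at all functionals. -/
def weakNhds (R : ℝ) (a : X) : Filter X :=
  comap (fun (x : X) (φ : X →L[ℝ] ℝ) => φ x) (𝓝 fun φ => φ a) ⊓ 𝓟 (Metric.closedBall 0 R)

theorem tendsto_weakNhds {ι : Type*} {l : Filter ι} {R : ℝ} {a : X} {g : ι → X} :
    Tendsto g l (weakNhds R a) ↔
      (∀ φ : X →L[ℝ] ℝ, Tendsto (fun i => φ (g i)) l (𝓝 (φ a))) ∧ ∀ᶠ i in l, ‖g i‖ ≤ R := by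
  simp [weakNhds, tendsto_inf, tendsto_comap_iff, tendsto_pi_nhds, Function.comp_def]

theorem mem_of_mem_weakNhds {R : ℝ} {a : X} (ha : ‖a‖ ≤ R) {s : Set X} (hs : s ∈ weakNhds R a) :
    a ∈ s := by
  have : Tendsto id (pure a) (weakNhds R a) :=
    tendsto_weakNhds.2 ⟨fun φ => tendsto_pure_nhds _ _, by simpa using ha⟩
  simpa using this hs

theorem weakNhds_mono {R R' : ℝ} (h : R ≤ R') (a : X) : weakNhds R a ≤ weakNhds R' a :=
  inf_le_inf_left _ (principal_mono.2 (Metric.closedBall_subset_closedBall h))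

/-- Every filter is the tail filter of a net, so convergence along nets gives convergence along
`weakNhds`. -/
theorem tendsto_of_weaklyCont {Y : Type u} [NormedAddCommGroup Y] {P : X → Y}
    (h : WeaklyContOnBoundedMap P) (R : ℝ) (a : X) :
    Tendsto P (weakNhds R a) (𝓝 (P a)) := by
  rcases eq_or_neBot (weakNhds R a) with hb | hb
  · rw [hb]; exact tendsto_bot
  let Γ : Type u := {p : Set X × X //
    p.1 ∈ weakNhds R a ∧ p.1 ⊆ Metric.closedBall 0 R ∧ p.2 ∈ p.1}
  let _ : Preorder Γ :=
    { le := fun p q => q.1.1 ⊆ p.1.1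
      le_refl := fun p => subset_rfl
      le_trans := fun p q r h1 h2 => subset_trans h2 h1 }
  have hball : Metric.closedBall (0 : X) R ∈ weakNhds R a :=
    mem_inf_of_right (mem_principal_self _)
  have : IsDirected Γ (· ≤ ·) := ⟨fun p q => by
    have hm := inter_mem p.2.1 q.2.1
    obtain ⟨y, hy⟩ := hb.nonempty_of_mem hm
    exact ⟨⟨(p.1.1 ∩ q.1.1, y), hm, Set.inter_subset_left.trans p.2.2.1, hy⟩,
      Set.inter_subset_left, Set.inter_subset_right⟩⟩
  have : Nonempty Γ := by
    obtain ⟨y, hy⟩ := hb.nonempty_of_mem hball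
    exact ⟨⟨(_, y), hball, subset_rfl, hy⟩⟩
  have hto : Tendsto (fun p : Γ => p.1.2) atTop (weakNhds R a) := by
    intro s hs
    have hm := inter_mem hs hball
    obtain ⟨y, hy⟩ := hb.nonempty_of_mem hm
    refine mem_atTop_sets.2 ⟨⟨(s ∩ Metric.closedBall 0 R, y), hm, Set.inter_subset_right, hy⟩, ?_⟩
    intro q hq
    exact (hq q.2.2.2).1
  have key := h Γ (fun p => p.1.2) a
    ⟨R, fun p => by simpa using p.2.2.1 p.2.2.2⟩ (tendsto_weakNhds.1 hto).1
  intro N hN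
  obtain ⟨p, hp⟩ := mem_atTop_sets.1 (key hN)
  refine mem_map.2 (mem_of_superset p.2.1 fun x hx => ?_)
  exact hp ⟨(p.1.1, x), p.2.1, p.2.2.1, hx⟩ (show p.1.1 ⊆ p.1.1 from subset_rfl)

/-- Precompactness of balls for the weak topology. -/
theorem exists_finite_cover {R : ℝ} {N : Set X} (hN : N ∈ weakNhds (2 * R) (0 : X)) :
    ∃ t : Set X, t ⊆ Metric.closedBall 0 R ∧ t.Finite ∧
      ∀ y ∈ Metric.closedBall (0 : X) R, ∃ z ∈ t, y - z ∈ N := by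
  obtain ⟨U, hU, V, hV, rfl⟩ := mem_inf_iff.1 hN
  obtain ⟨O, hO, hOU⟩ := mem_comap.1 hU
  set J : X → (X →L[ℝ] ℝ) → ℝ := fun x φ => φ x with hJ
  have hO' : O ∈ 𝓝 (0 : (X →L[ℝ] ℝ) → ℝ) := by
    convert hO using 2
    ext φ
    simp
  have hc : TotallyBounded (J '' Metric.closedBall 0 R) := by
    refine (isCompact_univ_pi fun φ : X →L[ℝ] ℝ =>
      isCompact_closedBall (0 : ℝ) (‖φ‖ * R)).totallyBounded.subset ?_
    rintro _ ⟨x, hx, rfl⟩ φ -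
    simp only [mem_closedBall_zero_iff] at hx ⊢
    exact φ.le_of_opNorm_le_of_le le_rfl hx
  have hent : {p : ((X →L[ℝ] ℝ) → ℝ) × ((X →L[ℝ] ℝ) → ℝ) | p.1 - p.2 ∈ O} ∈
      uniformity ((X →L[ℝ] ℝ) → ℝ) := by
    rw [uniformity_eq_comap_nhds_zero_swapped]
    exact preimage_mem_comap hO'
  obtain ⟨t, hts, htf, hT⟩ := Set.exists_subset_image_finite_and.1 (hc.exists_subset hent)
  refine ⟨t, hts, htf, fun y hy => ?_⟩
  have := hT ⟨y, hy, rfl⟩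
  simp only [Set.mem_iUnion, Set.mem_image] at this
  obtain ⟨_, ⟨z, hz, rfl⟩, h2⟩ := this
  refine ⟨z, hz, hOU ?_, mem_principal.1 hV ?_⟩
  · have h3 : J y - J z ∈ O := h2
    have h4 : J (y - z) = J y - J z := funext fun φ => map_sub φ y z
    rwa [← h4] at h3
  · have h1 := hts hz
    simp only [mem_closedBall_zero_iff] at h1 hy ⊢
    linarith [norm_sub_le y z]

/-- By polarization, a symmetric multilinear map whose polynomial is weakly continuous on bounded
sets is jointly weakly continuous on bounded sets. -/
theorem tendsto_multilinear {k : ℕ} (A : ContinuousMultilinearMap ℝ (fun _ : Fin k => X) Y)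
    (hsym : ∀ (σ : Equiv.Perm (Fin k)) (x : Fin k → X), A (x ∘ σ) = A x)
    (h : WeaklyContOnBoundedMap fun x => A fun _ => x) (R : ℝ) (b : Fin k → X) :
    Tendsto A (Filter.pi fun i => weakNhds R (b i)) (𝓝 (A b)) := by
  have hfac : (k.factorial : ℝ) ≠ 0 := by exact_mod_cast k.factorial_ne_zero
  have hA : ∀ x, A x = (k.factorial : ℝ)⁻¹ •
      ∑ t : Finset (Fin k), (-1 : ℤ) ^ t.card • A (fun _ => ∑ i ∈ tᶜ, x i) := by
    intro x
    have := polarization A.toMultilinearMap hsym x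
    rw [natCast_zsmul, ← Nat.cast_smul_eq_nsmul ℝ] at this
    rw [eq_inv_smul_iff₀ hfac]
    exact this.symm
  suffices hlim : Tendsto (fun x : Fin k → X => (k.factorial : ℝ)⁻¹ •
      ∑ t : Finset (Fin k), (-1 : ℤ) ^ t.card • A (fun _ => ∑ i ∈ tᶜ, x i))
      (Filter.pi fun i => weakNhds R (b i)) (𝓝 ((k.factorial : ℝ)⁻¹ •
      ∑ t : Finset (Fin k), (-1 : ℤ) ^ t.card • A (fun _ => ∑ i ∈ tᶜ, b i))) by
    rw [← hA b] at hlim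
    exact hlim.congr fun x => (hA x).symm
  refine Tendsto.const_smul (tendsto_finsetSum _ fun t _ => Tendsto.const_smul ?_ _) _
  have h0 : ∀ i, Tendsto (fun x : Fin k → X => x i) (Filter.pi fun i => weakNhds R (b i))
      (weakNhds R (b i)) := fun i => tendsto_eval_pi _ i
  refine (tendsto_of_weaklyCont h (∑ i ∈ tᶜ, R) (∑ i ∈ tᶜ, b i)).comp
    (tendsto_weakNhds.2 ⟨fun φ => ?_, ?_⟩)
  · simp only [map_sum]
    exact tendsto_finsetSum _ fun i _ => (tendsto_weakNhds.1 (h0 i)).1 φ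
  · filter_upwards [eventually_all.2 fun i => (tendsto_weakNhds.1 (h0 i)).2] with x hx
    exact norm_sum_le_of_le _ fun i _ => hx i

open Classical in
/-- Joint weak continuity upgrades to uniformity in the variables of any set `s` not containing
`i₀`, as the variable `i₀` tends weakly to `0`. The variables in `s` are released one at a time: by
precompactness of the ball, each of them is a member of a fixed finite set plus a weakly small
vector. -/
theorem tendsto_free {k : ℕ} (A : ContinuousMultilinearMap ℝ (fun _ : Fin k => X) Y)
    (h : ∀ (R : ℝ) (b : Fin k → X), Tendsto A (Filter.pi fun i => weakNhds R (b i)) (𝓝 (A b)))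
    (i₀ : Fin k) (s : Finset (Fin k)) (hs : i₀ ∉ s) :
    ∀ (R : ℝ) (b : Fin k → X), b i₀ = 0 →
      Tendsto A (Filter.pi fun i => if i ∈ s then 𝓟 (Metric.closedBall 0 R)
        else weakNhds R (b i)) (𝓝 0) := by
  induction s using Finset.induction_on with
  | empty =>
    intro R b hb
    simpa [A.map_coord_zero i₀ hb] using h R b
  | insert j s hj ih =>
    intro R b hb
    have hjs : i₀ ∉ s := fun h' => hs (Finset.mem_insert_of_mem h')
    have hij : i₀ ≠ j := fun h' => hs (h' ▸ Finset.mem_insert_self _ _)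
    rcases lt_or_ge R 0 with hR | hR
    · -- the ball is empty
      have : (Filter.pi fun i => if i ∈ insert j s then 𝓟 (Metric.closedBall (0 : X) R)
          else weakNhds R (b i)) = ⊥ := by
        refine Filter.pi_eq_bot.2 ⟨j, ?_⟩
        simp [Metric.closedBall_eq_empty.2 hR]
      rw [this]; exact tendsto_bot
    rw [Metric.tendsto_nhds]
    intro δ hδ
    have hev : ∀ R' (c : X), ∃ N : Fin k → Set X, (∀ i, N i ∈ if i ∈ s then
        𝓟 (Metric.closedBall 0 R') else weakNhds R' (Function.update b j c i)) ∧
        ∀ x : Fin k → X, (∀ i, x i ∈ N i) → ‖A x‖ < δ / 2 := by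
      intro R' c
      have := (Metric.tendsto_nhds.1 (ih hjs R' (Function.update b j c)
        (by rwa [Function.update_of_ne hij]))) (δ / 2) (half_pos hδ)
      obtain ⟨I, t, ht, hsub⟩ := Filter.mem_pi'.1 this
      refine ⟨t, ht, fun x hx => ?_⟩
      simpa using hsub fun i _ => hx i
    choose N hN hNA using hev
    have hNj : N (2 * R) 0 j ∈ weakNhds (2 * R) (0 : X) := by
      simpa [hj] using hN (2 * R) 0 j
    obtain ⟨t, htR, htf, ht⟩ := exists_finite_cover hNj
    have hM : ∀ i, i ≠ j → N (2 * R) 0 i ∩ ⋂ z ∈ t, N R z i ∈ if i ∈ insert j s then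
        𝓟 (Metric.closedBall (0 : X) R) else weakNhds R (b i) := by
      intro i hi
      refine inter_mem ?_ ((biInter_mem htf).2 fun z _ => ?_)
      · have h1 := hN (2 * R) 0 i
        by_cases his : i ∈ s
        · simp only [his, if_true, Finset.mem_insert, or_true] at h1 ⊢
          exact principal_mono.2 (Metric.closedBall_subset_closedBall (by linarith)) h1
        · simp only [his, if_false, Finset.mem_insert, hi, or_self, Function.update_of_ne hi]
            at h1 ⊢
          exact weakNhds_mono (by linarith) _ h1
      · have h1 := hN R z i
        by_cases his : i ∈ s
        · simpa [his] using h1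
        · simpa [his, hi] using h1
    filter_upwards [Filter.eventually_pi (p := fun i x => if i = j then
      x ∈ Metric.closedBall (0 : X) R else x ∈ N (2 * R) 0 i ∩ ⋂ z ∈ t, N R z i) (fun i => by
        by_cases hi : i = j
        · subst hi; simp
        · simp only [hi, if_false]; exact hM i hi)] with x hx
    obtain ⟨z, hz, hxz⟩ := ht (x j) (by simpa using hx j)
    have hsplit : A x = A (Function.update x j z) + A (Function.update x j (x j - z)) := by
      rw [← A.map_update_add, add_sub_cancel, Function.update_eq_self]
    have h1 : ‖A (Function.update x j z)‖ < δ / 2 := by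
      refine hNA R z _ fun i => ?_
      by_cases hi : i = j
      · subst hi
        rw [Function.update_self]
        refine mem_of_mem_weakNhds (by simpa using htR hz) ?_
        simpa [hj] using hN R z i
      · rw [Function.update_of_ne hi]
        have := hx i
        rw [if_neg hi] at this
        exact Set.mem_iInter₂.1 this.2 z hz
    have h2 : ‖A (Function.update x j (x j - z))‖ < δ / 2 := by
      refine hNA (2 * R) 0 _ fun i => ?_
      by_cases hi : i = j
      · subst hi
        rwa [Function.update_self]
      · rw [Function.update_of_ne hi]
        have := hx i
        rw [if_neg hi] at this
        exact this.1
    rw [dist_zero_right, hsplit]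
    linarith [norm_add_le (A (Function.update x j z)) (A (Function.update x j (x j - z)))]

/-- A linear operator that is weakly continuous at `0` on bounded sets is compact. -/
theorem isCompactOperator_of_tendsto_weakNhds [CompleteSpace Y] (T : X →L[ℝ] Y)
    (h : Tendsto T (weakNhds 2 0) (𝓝 0)) : IsCompactOperator T := by
  refine (isCompactOperator_iff_isCompact_closure_image_closedBall T.toLinearMap one_pos).2 ?_
  refine TotallyBounded.isCompact_of_isClosed (TotallyBounded.closure ?_) isClosed_closure
  rw [Metric.totallyBounded_iff]
  intro δ hδ
  have hN : T ⁻¹' Metric.ball 0 δ ∈ weakNhds (2 * 1) (0 : X) := by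
    rw [mul_one]; exact h (Metric.ball_mem_nhds _ hδ)
  obtain ⟨t, -, htf, ht⟩ := exists_finite_cover hN
  refine ⟨T '' t, htf.image _, ?_⟩
  rintro _ ⟨y, hy, rfl⟩
  obtain ⟨z, hz, hyz⟩ := ht y hy
  refine Set.mem_iUnion₂.2 ⟨T z, ⟨z, hz, rfl⟩, ?_⟩
  simpa [dist_eq_norm] using hyz

/-- The operator `x ↦ A (x, ·, …, ·)` attached to a polynomial weakly continuous on bounded sets is
compact. -/
theorem isCompactOperator_curryLeft [CompleteSpace Y] {n : ℕ}
    (A : ContinuousMultilinearMap ℝ (fun _ : Fin (n + 1) => X) Y)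
    (hsym : ∀ (σ : Equiv.Perm (Fin (n + 1))) (x : Fin (n + 1) → X), A (x ∘ σ) = A x)
    (h : WeaklyContOnBoundedMap fun x => A fun _ => x) :
    IsCompactOperator A.curryLeft := by
  classical
  refine isCompactOperator_of_tendsto_weakNhds _ ?_
  have h1 := tendsto_free A (tendsto_multilinear A hsym h) 0 (Finset.univ.erase 0) (by simp)
    2 0 rfl
  rw [Metric.tendsto_nhds] at h1 ⊢
  intro δ hδ
  obtain ⟨I, t, ht, hsub⟩ := Filter.mem_pi'.1 (h1 (δ / 2) (half_pos hδ))
  have ht0 : t 0 ∈ weakNhds 2 (0 : X) := by simpa using ht 0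
  filter_upwards [ht0] with x hx
  rw [dist_zero_right]
  refine lt_of_le_of_lt ?_ (half_lt_self hδ)
  refine ContinuousMultilinearMap.opNorm_le_bound (half_pos hδ).le fun m => ?_
  -- it is enough to test vectors with `1 ≤ ‖m i‖ < 2`
  refine MultilinearMap.bound_of_shell (A.curryLeft x).toMultilinearMap (ε := fun _ => 2)
    (c := fun _ => (2 : ℝ)) (fun _ => two_pos) (fun _ => by norm_num) (fun m hm1 hm2 => ?_) m
  have h3 : ‖A (Fin.cons x m)‖ < δ / 2 := by
    have : Fin.cons x m ∈ (I : Set (Fin (n + 1))).pi t := by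
      intro i _
      refine Fin.cases ?_ (fun i => ?_) i
      · exact hx
      · have h4 := ht i.succ
        simp only [Finset.mem_erase, ne_eq, Fin.succ_ne_zero, not_false_eq_true,
          Finset.mem_univ, and_self, if_true, mem_principal] at h4
        exact h4 (by simpa using (hm2 i).le)
    simpa using hsub this
  have h5 : 1 ≤ ∏ i, ‖m i‖ := by
    rw [← Finset.prod_const_one (s := (Finset.univ : Finset (Fin n)))]
    exact Finset.prod_le_prod (fun _ _ => zero_le_one) fun i _ => by simpa using hm1 i
  calc ‖A (Fin.cons x m)‖ ≤ δ / 2 * 1 := by rw [mul_one]; exact h3.le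
    _ ≤ _ := by gcongr

end WeakFilter

/-! ### Completions and extension of multilinear maps -/

section Extension

/-- The Banach space completion of a seminormed space. -/
theorem exists_completion {X : Type u} [AddCommGroup X] [Module ℝ X] (q : Seminorm ℝ X) :
    ∃ (Z : Type u) (_ : NormedAddCommGroup Z) (_ : NormedSpace ℝ Z) (_ : CompleteSpace Z)
      (e : X →ₗ[ℝ] Z), DenseRange e ∧ ∀ x, ‖e x‖ = q x := by
  let _ : SeminormedAddCommGroup X := q.toAddGroupSeminorm.toSeminormedAddCommGroup
  let _ : NormedSpace ℝ X := { norm_smul_le := fun a b => (map_smul_eq_mul q a b).le }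
  refine ⟨UniformSpace.Completion X, inferInstance, inferInstance, inferInstance,
    (UniformSpace.Completion.toComplL (𝕜 := ℝ) (E := X)).toLinearMap,
    UniformSpace.Completion.denseRange_coe, fun x => ?_⟩
  exact UniformSpace.Completion.norm_coe x

variable {X Y Z : Type*} [AddCommGroup X] [Module ℝ X]
  [NormedAddCommGroup Y] [NormedSpace ℝ Y] [CompleteSpace Y]
  [NormedAddCommGroup Z] [NormedSpace ℝ Z]

/-- Extension of multilinear maps along a linear map with dense range, one variable at a time. -/
theorem exists_multilinear_extension (e : X →ₗ[ℝ] Z) (he : DenseRange e) :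
    ∀ (k : ℕ) (A : MultilinearMap ℝ (fun _ : Fin k => X) Y) (C : ℝ), 0 ≤ C →
      (∀ x, ‖A x‖ ≤ C * ∏ i, ‖e (x i)‖) →
      ∃ B : ContinuousMultilinearMap ℝ (fun _ : Fin k => Z) Y,
        (∀ x : Fin k → X, B (fun i => e (x i)) = A x) ∧ ‖B‖ ≤ C := by
  intro k
  induction k with
  | zero =>
    intro A C hC hA
    refine ⟨ContinuousMultilinearMap.constOfIsEmpty ℝ _ (A 0), fun x => ?_, ?_⟩
    · rw [Subsingleton.elim x 0]; rfl
    · simpa using hA 0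
  | succ k ih =>
    intro A C hC hA
    have h1 : ∀ x : X, ∃ B : ContinuousMultilinearMap ℝ (fun _ : Fin k => Z) Y,
        (∀ y : Fin k → X, B (fun i => e (y i)) = A (Fin.cons x y)) ∧ ‖B‖ ≤ C * ‖e x‖ := by
      intro x
      refine ih (A.curryLeft x) (C * ‖e x‖) (by positivity) fun y => ?_
      have := hA (Fin.cons x y)
      rw [Fin.prod_univ_succ] at this
      simpa [mul_assoc] using this
    choose F hF hFn using h1
    have hdense : DenseRange (fun (y : Fin k → X) i => e (y i)) := DenseRange.piMap fun _ => he
    have hext : ∀ B B' : ContinuousMultilinearMap ℝ (fun _ : Fin k => Z) Y,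
        (∀ y : Fin k → X, B (fun i => e (y i)) = B' fun i => e (y i)) → B = B' := by
      intro B B' h
      exact DFunLike.coe_injective (hdense.equalizer B.cont B'.cont (funext h))
    let L : X →ₗ[ℝ] ContinuousMultilinearMap ℝ (fun _ : Fin k => Z) Y :=
      { toFun := F
        map_add' := fun x x' => hext _ _ fun y => by
          rw [add_apply, hF, hF, hF]
          exact A.cons_add y x x'
        map_smul' := fun c x => hext _ _ fun y => by
          rw [RingHom.id_apply, smul_apply, hF, hF]
          exact A.cons_smul y c x }
    refine ⟨(L.extendOfNorm e).uncurryLeft, fun x => ?_, ?_⟩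
    · rw [ContinuousLinearMap.uncurryLeft_apply, LinearMap.extendOfNorm_eq he ⟨C, hFn⟩]
      refine (hF (x 0) (Fin.tail x)).trans ?_
      rw [Fin.cons_self_tail]
    · rw [ContinuousLinearMap.uncurryLeft_norm]
      exact LinearMap.opNorm_extendOfNorm_le he hC hFn

end Extension

/-! ### Seminorms of absolutely convex hulls -/

section Hull

variable {X : Type*} [NormedAddCommGroup X] [NormedSpace ℝ X]

/-- The largest seminorm bounded by `1` on `G`, i.e. the Minkowski functional of the closed
absolutely convex hull of `G`. It is meaningful when `G` contains the unit ball. -/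
noncomputable def hullSeminorm (G : Set X) : Seminorm ℝ X :=
  sSup {p : Seminorm ℝ X | ∀ x ∈ G, p x ≤ 1}

variable {G : Set X}

theorem le_norm_of_le_one (hG : Metric.closedBall 0 1 ⊆ G) {p : Seminorm ℝ X}
    (hp : ∀ x ∈ G, p x ≤ 1) (x : X) : p x ≤ ‖x‖ := by
  rcases eq_or_ne x 0 with rfl | hx
  · simp
  have hx' : 0 < ‖x‖ := norm_pos_iff.2 hx
  have h1 := hp (‖x‖⁻¹ • x) (hG (by simp [norm_smul, hx'.ne']))
  rw [map_smul_eq_mul, norm_inv, norm_norm, inv_mul_le_iff₀ hx', mul_one] at h1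
  exact h1

theorem bddAbove_hull (hG : Metric.closedBall 0 1 ⊆ G) :
    BddAbove {p : Seminorm ℝ X | ∀ x ∈ G, p x ≤ 1} :=
  ⟨normSeminorm ℝ X, fun _ hp x => le_norm_of_le_one hG hp x⟩

theorem le_hullSeminorm (hG : Metric.closedBall 0 1 ⊆ G) {p : Seminorm ℝ X}
    (hp : ∀ x ∈ G, p x ≤ 1) (x : X) : p x ≤ hullSeminorm G x :=
  le_csSup (bddAbove_hull hG) hp x

theorem hullSeminorm_le_one (hG : Metric.closedBall 0 1 ⊆ G) {x : X} (hx : x ∈ G) :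
    hullSeminorm G x ≤ 1 := by
  rw [hullSeminorm, Seminorm.sSup_apply (bddAbove_hull hG)]
  have : Nonempty {p : Seminorm ℝ X | ∀ x ∈ G, p x ≤ 1} := ⟨⟨0, fun _ _ => by simp⟩⟩
  exact ciSup_le fun p => p.2 x hx

theorem hullSeminorm_le_norm (hG : Metric.closedBall 0 1 ⊆ G) (x : X) :
    hullSeminorm G x ≤ ‖x‖ :=
  le_norm_of_le_one hG (fun _ hy => hullSeminorm_le_one hG hy) x

theorem hullSeminorm_le_of_smul_mem (hG : Metric.closedBall 0 1 ⊆ G) {x : X} {t : ℝ} (ht : 0 < t)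
    (hx : t⁻¹ • x ∈ G) : hullSeminorm G x ≤ t := by
  have h1 := hullSeminorm_le_one hG hx
  rw [map_smul_eq_mul, norm_inv, Real.norm_of_nonneg ht.le, inv_mul_le_iff₀ ht, mul_one] at h1
  exact h1

theorem le_mul_hullSeminorm (hG : Metric.closedBall 0 1 ⊆ G) {p : Seminorm ℝ X} {C : ℝ}
    (hC : 0 ≤ C) (hp : ∀ x ∈ G, p x ≤ C) (x : X) : p x ≤ C * hullSeminorm G x := by
  have key : ∀ D : NNReal, 0 < D → C ≤ D → p x ≤ D * hullSeminorm G x := by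
    intro D hD hCD
    have hD' : (0 : ℝ) < D := hD
    have h1 := le_hullSeminorm hG (p := D⁻¹ • p) (fun y hy => by
      rw [smul_apply, NNReal.smul_def, NNReal.coe_inv, smul_eq_mul,
        inv_mul_le_iff₀ hD', mul_one]
      exact (hp y hy).trans hCD) x
    rwa [smul_apply, NNReal.smul_def, NNReal.coe_inv, smul_eq_mul,
      inv_mul_le_iff₀ hD'] at h1
  refine le_of_forall_pos_le_add fun η hη => ?_
  have hq : 0 ≤ hullSeminorm G x := apply_nonneg _ x
  have h2 : 0 < η / (hullSeminorm G x + 1) := by positivity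
  refine (key ⟨C + η / (hullSeminorm G x + 1), by positivity⟩
    (by change (0 : ℝ) < C + _; positivity) (by change C ≤ C + _; linarith)).trans ?_
  change (C + η / (hullSeminorm G x + 1)) * hullSeminorm G x ≤ _
  have h3 : η / (hullSeminorm G x + 1) * hullSeminorm G x ≤ η := by
    rw [div_mul_eq_mul_div, div_le_iff₀ (by positivity)]
    nlinarith
  linarith

end Hull

/-! ### Compactness of the canonical operators -/

section Compactness

variable {X F : Type*} [NormedAddCommGroup X] [NormedSpace ℝ X]
  [NormedAddCommGroup F] [NormedSpace ℝ F]

/-- The unit ball of `X` enlarged in the directions in which `T` is small. If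
`‖T x‖ ≤ ‖x‖` for all `x`, it contains the unit ball and decreases with `m`. -/
def gauged (T : X →L[ℝ] F) (m : ℕ) : Set X := {x | ‖T x‖ * ‖x‖ ^ m ≤ 1}

theorem closedBall_subset_gauged {T : X →L[ℝ] F} (hT : ∀ x, ‖T x‖ ≤ ‖x‖) (m : ℕ) :
    Metric.closedBall 0 1 ⊆ gauged T m := by
  intro x hx
  rw [mem_closedBall_zero_iff] at hx
  exact mul_le_one₀ ((hT x).trans hx) (by positivity) (pow_le_one₀ (norm_nonneg x) hx)

theorem gauged_succ_subset {T : X →L[ℝ] F} (hT : ∀ x, ‖T x‖ ≤ ‖x‖) (m : ℕ) :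
    gauged T (m + 1) ⊆ gauged T m := by
  intro x hx
  rcases le_total ‖x‖ 1 with h | h
  · exact closedBall_subset_gauged hT m (by simpa using h)
  · have hx' : ‖T x‖ * ‖x‖ ^ (m + 1) ≤ 1 := hx
    refine le_trans ?_ hx'
    exact mul_le_mul_of_nonneg_left (pow_le_pow_right₀ h (Nat.le_succ m)) (norm_nonneg _)

/-- On bounded sets the hull seminorm is controlled by `T`. -/
theorem exists_hull_le {T : X →L[ℝ] F} (hT : ∀ x, ‖T x‖ ≤ ‖x‖) (m : ℕ) {R δ : ℝ} (hR : 0 ≤ R)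
    (hδ : 0 < δ) : ∃ η > 0, ∀ x, ‖x‖ ≤ R → ‖T x‖ < η → hullSeminorm (gauged T m) x ≤ δ := by
  refine ⟨δ ^ (m + 1) / (R ^ m + 1), by positivity, fun x hx hTx => ?_⟩
  refine hullSeminorm_le_of_smul_mem (closedBall_subset_gauged hT m) hδ ?_
  change ‖T (δ⁻¹ • x)‖ * ‖δ⁻¹ • x‖ ^ m ≤ 1
  rw [map_smul, norm_smul, norm_smul, norm_inv, Real.norm_of_nonneg hδ.le]
  have h1 : ‖T x‖ * ‖x‖ ^ m ≤ δ ^ (m + 1) := by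
    rw [lt_div_iff₀ (by positivity)] at hTx
    have : ‖x‖ ^ m ≤ R ^ m + 1 := by
      have := pow_le_pow_left₀ (norm_nonneg x) hx m
      linarith
    exact (mul_le_mul_of_nonneg_left this (norm_nonneg _)).trans hTx.le
  calc δ⁻¹ * ‖T x‖ * (δ⁻¹ * ‖x‖) ^ m = (‖T x‖ * ‖x‖ ^ m) / δ ^ (m + 1) := by
        rw [mul_pow, pow_succ, inv_pow]; field_simp
    _ ≤ 1 := by rw [div_le_one (by positivity)]; exact h1

variable {Z : Type*} [NormedAddCommGroup Z] [NormedSpace ℝ Z]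

/-- Compactness of the canonical operator from `X` to the completion for a hull seminorm. -/
theorem totallyBounded_image_closedBall {T : X →L[ℝ] F} (hT : ∀ x, ‖T x‖ ≤ ‖x‖)
    (hTc : IsCompactOperator T) (m : ℕ) (e : X →ₗ[ℝ] Z)
    (he : ∀ x, ‖e x‖ = hullSeminorm (gauged T m) x) {R : ℝ} (hR : 0 ≤ R) :
    TotallyBounded (e '' Metric.closedBall 0 R) := by
  have htb : TotallyBounded (T '' Metric.closedBall 0 R) :=
    (IsCompactOperator.isCompact_closure_image_closedBall (f := T.toLinearMap) hTc
      R).totallyBounded.subset subset_closure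
  rw [Metric.totallyBounded_iff]
  intro δ hδ
  obtain ⟨η, hη, hle⟩ := exists_hull_le hT m (R := 2 * R) (by positivity) (half_pos hδ)
  obtain ⟨t, hts, htf, ht⟩ := Set.exists_subset_image_finite_and.1
    (htb.exists_subset (Metric.dist_mem_uniformity hη))
  refine ⟨e '' t, htf.image _, ?_⟩
  rintro _ ⟨x, hx, rfl⟩
  have := ht ⟨x, hx, rfl⟩
  simp only [Set.mem_iUnion, Set.mem_image] at this
  obtain ⟨_, ⟨z, hz, rfl⟩, h2⟩ := this
  have h2' : dist (T x) (T z) < η := h2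
  refine Set.mem_iUnion₂.2 ⟨e z, ⟨z, hz, rfl⟩, ?_⟩
  rw [Metric.mem_ball, dist_eq_norm, ← map_sub, he]
  refine (hle (x - z) ?_ ?_).trans_lt (half_lt_self hδ)
  · have h1 := hts hz
    simp only [mem_closedBall_zero_iff] at h1 hx
    linarith [norm_sub_le x z]
  · rwa [map_sub, ← dist_eq_norm]

/-- The unit ball of the smaller hull is contained, up to a small multiple of the larger hull, in a
multiple of the unit ball of `X`. -/
theorem exists_split {T : X →L[ℝ] F} (hT : ∀ x, ‖T x‖ ≤ ‖x‖) (m : ℕ) {δ : ℝ} (hδ : 0 < δ) :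
    ∃ r ≥ 0, ∀ x, hullSeminorm (gauged T (m + 1)) x < 2 →
      ∃ a, ‖a‖ ≤ r ∧ hullSeminorm (gauged T m) (x - a) ≤ δ := by
  obtain ⟨t, ht, rfl⟩ : ∃ t : ℝ, 0 < t ∧ δ = 2 * t := ⟨δ / 2, half_pos hδ, by ring⟩
  set r : ℝ := (t⁻¹) ^ (m + 1) with hr
  have hr0 : 0 < r := by positivity
  refine ⟨2 * r, by positivity, fun x hx => ?_⟩
  obtain ⟨r', hr'⟩ : ∃ r' : NNReal, (r' : ℝ) = r⁻¹ := ⟨⟨r⁻¹, by positivity⟩, rfl⟩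
  obtain ⟨t', ht'⟩ : ∃ t' : NNReal, (t' : ℝ) = t⁻¹ := ⟨⟨t⁻¹, by positivity⟩, rfl⟩
  -- the infimal convolution of the two scaled seminorms is at most `1` on `gauged T (m + 1)`
  have hinf : ∀ y, (r' • normSeminorm ℝ X ⊓
      t' • hullSeminorm (gauged T m)) y =
      ⨅ u, (r⁻¹ * ‖u‖ + t⁻¹ * hullSeminorm (gauged T m) (y - u)) := fun y => by
    rw [← hr', ← ht']; rfl
  have hbdd : ∀ y, BddBelow (Set.range fun u => r⁻¹ * ‖u‖ +
      t⁻¹ * hullSeminorm (gauged T m) (y - u)) := fun y =>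
    ⟨0, by rintro _ ⟨u, rfl⟩; have := apply_nonneg (hullSeminorm (gauged T m)) (y - u); positivity⟩
  have h1 := le_hullSeminorm (closedBall_subset_gauged hT (m + 1))
    (p := r' • normSeminorm ℝ X ⊓
      t' • hullSeminorm (gauged T m)) (fun g hg => by
      rw [hinf]
      rcases le_or_gt ‖g‖ r with h | h
      · refine (ciInf_le (hbdd g) g).trans ?_
        simp only [sub_self, map_zero, mul_zero, add_zero]
        rw [inv_mul_le_iff₀ hr0, mul_one]
        exact h
      · refine (ciInf_le (hbdd g) 0).trans ?_
        simp only [sub_zero, norm_zero, mul_zero, zero_add]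
        rw [inv_mul_le_iff₀ ht, mul_one]
        refine hullSeminorm_le_of_smul_mem (closedBall_subset_gauged hT m) ht ?_
        change ‖T (t⁻¹ • g)‖ * ‖t⁻¹ • g‖ ^ m ≤ 1
        rw [map_smul, norm_smul, norm_smul, norm_inv, Real.norm_of_nonneg ht.le]
        have hg' : ‖T g‖ * ‖g‖ ^ (m + 1) ≤ 1 := hg
        calc t⁻¹ * ‖T g‖ * (t⁻¹ * ‖g‖) ^ m = ‖T g‖ * ‖g‖ ^ m * r := by
              rw [hr, mul_pow, pow_succ]; ring
          _ ≤ ‖T g‖ * ‖g‖ ^ m * ‖g‖ := by gcongr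
          _ = ‖T g‖ * ‖g‖ ^ (m + 1) := by rw [pow_succ]; ring
          _ ≤ 1 := hg') x
  rw [hinf] at h1
  obtain ⟨a, ha⟩ := exists_lt_of_ciInf_lt (h1.trans_lt hx)
  have h2 : 0 ≤ t⁻¹ * hullSeminorm (gauged T m) (x - a) := by
    have := apply_nonneg (hullSeminorm (gauged T m)) (x - a); positivity
  have h3 : 0 ≤ r⁻¹ * ‖a‖ := by positivity
  have h4 : r⁻¹ * ‖a‖ ≤ 2 := by linarith
  have h5 : t⁻¹ * hullSeminorm (gauged T m) (x - a) ≤ 2 := by linarith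
  rw [inv_mul_le_iff₀ hr0] at h4
  rw [inv_mul_le_iff₀ ht] at h5
  exact ⟨a, by linarith, by linarith⟩

/-- Compactness of the canonical operator between the completions for consecutive hull seminorms. -/
theorem totallyBounded_image_hull {T : X →L[ℝ] F} (hT : ∀ x, ‖T x‖ ≤ ‖x‖)
    (hTc : IsCompactOperator T) (m : ℕ) (e : X →ₗ[ℝ] Z)
    (he : ∀ x, ‖e x‖ = hullSeminorm (gauged T m) x) :
    TotallyBounded (e '' {x | hullSeminorm (gauged T (m + 1)) x < 2}) := by
  rw [Metric.totallyBounded_iff]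
  intro δ hδ
  obtain ⟨r, hr, hsplit⟩ := exists_split hT m (half_pos hδ)
  obtain ⟨t, htf, ht⟩ := Metric.totallyBounded_iff.1
    (totallyBounded_image_closedBall hT hTc m e he hr) (δ / 2) (half_pos hδ)
  refine ⟨t, htf, ?_⟩
  rintro _ ⟨x, hx, rfl⟩
  obtain ⟨a, ha, hxa⟩ := hsplit x hx
  obtain ⟨y, hy, hay⟩ := Set.mem_iUnion₂.1 (ht ⟨a, by simpa using ha, rfl⟩)
  refine Set.mem_iUnion₂.2 ⟨y, hy, ?_⟩
  rw [← he, map_sub, ← dist_eq_norm] at hxa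
  rw [Metric.mem_ball] at hay ⊢
  linarith [dist_triangle (e x) (e a) y]

end Compactness

/-! ### Factorization -/

section Factorization

/-- A compact operator followed by a continuous polynomial is weakly continuous on bounded sets. -/
theorem weaklyCont_of_isCompactOperator {k : ℕ} {Z W Y : Type u}
    [NormedAddCommGroup Z] [NormedSpace ℝ Z] [NormedAddCommGroup W] [NormedSpace ℝ W]
    [NormedAddCommGroup Y] [NormedSpace ℝ Y] (S : Z →L[ℝ] W) (hS : IsCompactOperator S)
    (B : ContinuousMultilinearMap ℝ (fun _ : Fin k => W) Y) :
    WeaklyContOnBoundedMap fun z => B fun _ => S z := by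
  intro Γ _ _ _ x L ⟨C, hC⟩ hx
  have hSx : Tendsto (fun α => S (x α)) atTop (𝓝 (S L)) := by
    refine IsCompact.tendsto_nhds_of_unique_mapClusterPt
      (IsCompactOperator.isCompact_closure_image_closedBall (f := S.toLinearMap) hS C)
      (Eventually.of_forall fun α => subset_closure ⟨x α, by simpa using hC α, rfl⟩)
      fun y _ hy => ?_
    -- a cluster point of the net agrees with `S L` on every functional
    refine (SeparatingDual.eq_iff_forall_dual_eq (R := ℝ)).2 fun φ => ?_
    have h1 : MapClusterPt (φ y) atTop (fun α => φ (S (x α))) :=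
      MapClusterPt.continuousAt_comp φ.continuous.continuousAt hy
    have h2 : Tendsto (fun α => φ (S (x α))) atTop (𝓝 (φ (S L))) := hx (φ.comp S)
    exact eq_of_nhds_neBot (ClusterPt.mono h1 h2)
  have hcont : Continuous fun w : W => B fun _ => w := B.cont.comp (by fun_prop)
  exact (hcont.tendsto _).comp hSx

variable {X Y : Type u} [NormedAddCommGroup X] [NormedSpace ℝ X]
  [NormedAddCommGroup Y] [NormedSpace ℝ Y]

/-- If every `x i` lies in the enlarged ball then `A x` is bounded: put the variable of largest norm
in the first slot. -/
theorem norm_le_of_mem_gauged {n : ℕ}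
    (A : ContinuousMultilinearMap ℝ (fun _ : Fin (n + 1) => X) Y)
    (hsym : ∀ (σ : Equiv.Perm (Fin (n + 1))) (x : Fin (n + 1) → X), A (x ∘ σ) = A x)
    (hA : 0 < ‖A‖) {x : Fin (n + 1) → X}
    (hx : ∀ i, x i ∈ gauged (‖A‖⁻¹ • A.curryLeft) n) : ‖A x‖ ≤ ‖A‖ := by
  obtain ⟨j, hj⟩ := Finite.exists_max fun i => ‖x i‖
  have hxj : ‖(‖A‖⁻¹ • A.curryLeft) (x j)‖ * ‖x j‖ ^ n ≤ 1 := hx j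
  rw [smul_apply, norm_smul, norm_inv, norm_norm, mul_assoc, inv_mul_le_iff₀ hA, mul_one] at hxj
  rw [← hsym (Equiv.swap 0 j) x]
  have h1 : A (x ∘ Equiv.swap 0 j) =
      A.curryLeft (x j) (fun i => x (Equiv.swap 0 j i.succ)) := by
    rw [ContinuousMultilinearMap.curryLeft_apply]
    congr 1
    ext i
    refine Fin.cases ?_ (fun i => ?_) i <;> simp
  rw [h1]
  refine le_trans ?_ hxj
  refine (ContinuousMultilinearMap.le_opNorm _ _).trans ?_
  gcongr
  calc ∏ i : Fin n, ‖x (Equiv.swap 0 j i.succ)‖ ≤ ∏ _i : Fin n, ‖x j‖ :=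
        Finset.prod_le_prod (fun _ _ => norm_nonneg _) fun i _ => hj _
    _ = ‖x j‖ ^ n := by simp

/-- A bound for `A` on a set passes to its absolutely convex hull, one variable at a time. -/
theorem norm_le_prod_hull {k : ℕ} (A : ContinuousMultilinearMap ℝ (fun _ : Fin k => X) Y)
    {G : Set X} (hG : Metric.closedBall 0 1 ⊆ G) {C : ℝ} (hC : 0 ≤ C)
    (h : ∀ x : Fin k → X, (∀ i, x i ∈ G) → ‖A x‖ ≤ C) (x : Fin k → X) :
    ‖A x‖ ≤ C * ∏ i, hullSeminorm G (x i) := by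
  have key : ∀ s : Finset (Fin k), ∀ x : Fin k → X, (∀ i ∉ s, x i ∈ G) →
      ‖A x‖ ≤ C * ∏ i ∈ s, hullSeminorm G (x i) := by
    intro s
    induction s using Finset.induction_on with
    | empty => intro x hx; simpa using h x fun i => hx i (by simp)
    | insert j s hj ih =>
      intro x hx
      let p : Seminorm ℝ X :=
        (normSeminorm ℝ Y).comp (A.toMultilinearMap.toLinearMap x j)
      have hp : ∀ y, p y = ‖A (Function.update x j y)‖ := fun y => rfl
      have hprod : ∀ y, ∏ i ∈ s, hullSeminorm G (Function.update x j y i) =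
          ∏ i ∈ s, hullSeminorm G (x i) := fun y =>
        Finset.prod_congr rfl fun i hi => by
          rw [Function.update_of_ne (ne_of_mem_of_not_mem hi hj)]
      have h1 := le_mul_hullSeminorm hG (p := p) (C := C * ∏ i ∈ s, hullSeminorm G (x i))
        (mul_nonneg hC (Finset.prod_nonneg fun i _ => apply_nonneg _ _)) (fun y hy => by
          rw [hp, ← hprod y]
          refine ih _ fun i hi => ?_
          by_cases hij : i = j
          · subst hij; rwa [Function.update_self]
          · rw [Function.update_of_ne hij]
            exact hx i (by simp [hij, hi])) (x j)
      rw [hp, Function.update_eq_self] at h1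
      rw [Finset.prod_insert hj]
      linarith
  exact key Finset.univ x (by simp)

theorem polyNorm_le_norm {k : ℕ} (Q : ContinuousMultilinearMap ℝ (fun _ : Fin k => X) Y) :
    polyNorm Q ≤ ‖Q‖ := by
  refine csSup_le ⟨_, 0, by simp, rfl⟩ ?_
  rintro _ ⟨z, hz, rfl⟩
  rw [mem_closedBall_zero_iff] at hz
  refine (Q.le_opNorm _).trans ?_
  refine mul_le_of_le_one_right (norm_nonneg _) ?_
  exact Finset.prod_le_one (fun _ _ => norm_nonneg _) fun _ _ => hz

/-- The factorization, even without the factor `1 + ε`. The Banach space is the completion of `X`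
for the hull seminorm of `gauged T (n + 1)`, and the polynomial is the extension of `A` to the
completion for `gauged T n`, composed with the canonical operator between the two completions. -/
theorem exists_factorization [CompleteSpace Y] {k : ℕ}
    (A : ContinuousMultilinearMap ℝ (fun _ : Fin k => X) Y)
    [CompleteSpace X]
    (hsym : ∀ (σ : Equiv.Perm (Fin k)) (x : Fin k → X), A (x ∘ σ) = A x)
    (h : WeaklyContOnBoundedMap fun x => A fun _ => x) :
    ∃ (Z : Type u) (_ : NormedAddCommGroup Z) (_ : NormedSpace ℝ Z) (_ : CompleteSpace Z)
      (S : X →L[ℝ] Z), IsCompactOperator S ∧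
        ∃ Qhat : ContinuousMultilinearMap ℝ (fun _ : Fin k => Z) Y,
          WeaklyContOnBoundedMap (fun z => Qhat fun _ => z) ∧
          (∀ x : X, (A fun _ => x) = Qhat fun _ => S x) ∧
          polyNorm Qhat * ‖S‖ ^ k ≤ ‖A‖ := by
  rcases k with _ | n
  · -- a `0`-homogeneous polynomial is constant
    have hconst : ∀ x y : Fin 0 → X, A x = A y := fun x y => by rw [Subsingleton.elim x y]
    refine ⟨X, inferInstance, inferInstance, inferInstance, 0, isCompactOperator_zero, A, h,
      fun x => hconst _ _, ?_⟩
    rw [pow_zero, mul_one]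
    exact polyNorm_le_norm A
  rcases eq_or_ne A 0 with rfl | hA0
  · refine ⟨X, inferInstance, inferInstance, inferInstance, 0, isCompactOperator_zero, 0, h,
      fun x => rfl, ?_⟩
    simp
  have hA : 0 < ‖A‖ := norm_pos_iff.2 hA0
  set T := ‖A‖⁻¹ • A.curryLeft with hTdef
  have hTc : IsCompactOperator T := (isCompactOperator_curryLeft A hsym h).smul ‖A‖⁻¹
  have hT : ∀ x, ‖T x‖ ≤ ‖x‖ := by
    intro x
    rw [hTdef, smul_apply, norm_smul, norm_inv, norm_norm, inv_mul_le_iff₀ hA]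
    refine (A.curryLeft.le_opNorm x).trans ?_
    rw [ContinuousMultilinearMap.curryLeft_norm]
  -- `Z₁`, `Z₂` are the completions of `X` for the hulls of the smaller and the larger set
  obtain ⟨Z₁, _, _, _, e₁, hd₁, he₁⟩ := exists_completion (hullSeminorm (gauged T (n + 1)))
  obtain ⟨Z₂, _, _, _, e₂, hd₂, he₂⟩ := exists_completion (hullSeminorm (gauged T n))
  have hle : ∀ x, ‖e₁ x‖ ≤ 1 * ‖x‖ := fun x => by
    rw [he₁, one_mul]; exact hullSeminorm_le_norm (closedBall_subset_gauged hT _) x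
  have h21 : ∀ x, ‖e₂ x‖ ≤ 1 * ‖e₁ x‖ := fun x => by
    rw [he₁, he₂, one_mul]
    exact le_hullSeminorm (closedBall_subset_gauged hT _) (fun y hy =>
      hullSeminorm_le_one (closedBall_subset_gauged hT _) (gauged_succ_subset hT n hy)) x
  obtain ⟨B, hB, hBn⟩ := exists_multilinear_extension e₂ hd₂ (n + 1) A.toMultilinearMap ‖A‖
    hA.le (fun x => by
      simp only [he₂]
      exact norm_le_prod_hull A (closedBall_subset_gauged hT n) hA.le
        (fun y hy => norm_le_of_mem_gauged A hsym hA hy) x)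
  let S₂ : Z₁ →L[ℝ] Z₂ := e₂.extendOfNorm e₁
  have hS₂ : ∀ x, S₂ (e₁ x) = e₂ x := LinearMap.extendOfNorm_eq hd₁ ⟨1, h21⟩
  have hS₂n : ‖S₂‖ ≤ 1 := LinearMap.opNorm_extendOfNorm_le hd₁ zero_le_one h21
  have hS₂c : IsCompactOperator S₂ := by
    refine (isCompactOperator_iff_isCompact_closure_image_closedBall S₂.toLinearMap one_pos).2 ?_
    refine TotallyBounded.isCompact_of_isClosed (TotallyBounded.closure ?_) isClosed_closure
    refine (totallyBounded_image_hull hT hTc n e₂ he₂).closure.subset ?_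
    rintro _ ⟨z, hz, rfl⟩
    have hz2 : z ∈ closure (Metric.ball 0 2 ∩ Set.range e₁) :=
      hd₁.open_subset_closure_inter Metric.isOpen_ball
        (Metric.closedBall_subset_ball one_lt_two hz)
    refine closure_mono ?_ (image_closure_subset_closure_image S₂.continuous ⟨z, hz2, rfl⟩)
    rintro _ ⟨_, ⟨hx, x, rfl⟩, rfl⟩
    refine ⟨x, ?_, (hS₂ x).symm⟩
    rw [mem_ball_zero_iff, he₁] at hx
    exact hx
  let S₁ : X →L[ℝ] Z₁ := e₁.mkContinuous 1 hle
  have hS₁c : IsCompactOperator S₁ := by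
    refine (isCompactOperator_iff_isCompact_closure_image_closedBall S₁.toLinearMap one_pos).2 ?_
    refine TotallyBounded.isCompact_of_isClosed (TotallyBounded.closure ?_) isClosed_closure
    exact totallyBounded_image_closedBall hT hTc (n + 1) e₁ he₁ zero_le_one
  refine ⟨Z₁, inferInstance, inferInstance, inferInstance, S₁, hS₁c,
    B.compContinuousLinearMap fun _ => S₂, weaklyCont_of_isCompactOperator S₂ hS₂c B,
    fun x => ?_, ?_⟩
  · refine (hB fun _ => x).symm.trans ?_
    rw [ContinuousMultilinearMap.compContinuousLinearMap_apply]
    congr 1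
    ext i
    exact (hS₂ x).symm
  · have hQ : polyNorm (B.compContinuousLinearMap fun _ => S₂) ≤ ‖A‖ := by
      refine (polyNorm_le_norm _).trans
        ((ContinuousMultilinearMap.norm_compContinuousLinearMap_le _ _).trans ?_)
      refine le_trans (mul_le_of_le_one_right (norm_nonneg _) ?_) hBn
      exact Finset.prod_le_one (fun _ _ => norm_nonneg _) fun _ _ => hS₂n
    have hS₁n : ‖S₁‖ ^ (n + 1) ≤ 1 :=
      pow_le_one₀ (norm_nonneg _) (e₁.mkContinuous_norm_le zero_le_one hle)
    calc _ ≤ ‖A‖ * ‖S₁‖ ^ (n + 1) := by gcongr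
      _ ≤ ‖A‖ := mul_le_of_le_one_right hA.le hS₁n

end Factorization

end WeakFactor

/-- Corollary (González–Gutiérrez). A continuous `k`-homogeneous polynomial `P` (with
symmetric `k`-linear map `P̂`) is weakly continuous on bounded sets iff `P = Q ∘ S` for some
compact operator `S` and some continuous `k`-homogeneous polynomial `Q` weakly continuous on
bounded sets; moreover `Z`, `S`, `Q` can then be chosen with `‖Q‖ ‖S‖^k ≤ (1 + ε) ‖P̂‖`. -/
theorem poly_weaklyContOnBounded_iff_factors_compact {k : ℕ} {X Y : Type u}
    [NormedAddCommGroup X] [NormedSpace ℝ X] [CompleteSpace X]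
    [NormedAddCommGroup Y] [NormedSpace ℝ Y] [CompleteSpace Y]
    {ε : ℝ} (hε : 0 < ε)
    (P : X → Y) (Phat : ContinuousMultilinearMap ℝ (fun _ : Fin k => X) Y)
    (hsym : ∀ (σ : Equiv.Perm (Fin k)) (x : Fin k → X), Phat (x ∘ σ) = Phat x)
    (hP : ∀ x : X, P x = Phat fun _ => x) :
    (WeaklyContOnBoundedMap P ↔
      ∃ (Z : Type u) (_ : NormedAddCommGroup Z) (_ : NormedSpace ℝ Z) (_ : CompleteSpace Z)
        (S : X →L[ℝ] Z), IsCompactOperator S ∧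
          ∃ Qhat : ContinuousMultilinearMap ℝ (fun _ : Fin k => Z) Y,
            WeaklyContOnBoundedMap (fun z => Qhat fun _ => z) ∧
            ∀ x : X, P x = Qhat fun _ => S x) ∧
    (WeaklyContOnBoundedMap P →
      ∃ (Z : Type u) (_ : NormedAddCommGroup Z) (_ : NormedSpace ℝ Z) (_ : CompleteSpace Z)
        (S : X →L[ℝ] Z), IsCompactOperator S ∧
          ∃ Qhat : ContinuousMultilinearMap ℝ (fun _ : Fin k => Z) Y,
            WeaklyContOnBoundedMap (fun z => Qhat fun _ => z) ∧
            (∀ x : X, P x = Qhat fun _ => S x) ∧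
            polyNorm Qhat * ‖S‖ ^ k ≤ (1 + ε) * ‖Phat‖) := by
  have hPfun : P = fun x => Phat fun _ => x := funext hP
  have main : WeaklyContOnBoundedMap P →
      ∃ (Z : Type u) (_ : NormedAddCommGroup Z) (_ : NormedSpace ℝ Z) (_ : CompleteSpace Z)
        (S : X →L[ℝ] Z), IsCompactOperator S ∧
          ∃ Qhat : ContinuousMultilinearMap ℝ (fun _ : Fin k => Z) Y,
            WeaklyContOnBoundedMap (fun z => Qhat fun _ => z) ∧
            (∀ x : X, P x = Qhat fun _ => S x) ∧
            polyNorm Qhat * ‖S‖ ^ k ≤ (1 + ε) * ‖Phat‖ := by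
    intro h
    rw [hPfun] at h
    obtain ⟨Z, i₁, i₂, i₃, S, hS, Q, hQ, hPQ, hn⟩ := WeakFactor.exists_factorization Phat hsym h
    refine ⟨Z, i₁, i₂, i₃, S, hS, Q, hQ, fun x => (hP x).trans (hPQ x), hn.trans ?_⟩
    nlinarith [norm_nonneg Phat]
  refine ⟨⟨fun h => ?_, ?_⟩, main⟩
  · obtain ⟨Z, i₁, i₂, i₃, S, hS, Q, hQ, hPQ, -⟩ := main h
    exact ⟨Z, i₁, i₂, i₃, S, hS, Q, hQ, hPQ⟩
  · rintro ⟨Z, _, _, _, S, -, Q, hQ, hPQ⟩ Γ _ _ _ x L ⟨C, hC⟩ hx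
    simp only [hPQ]
    exact hQ Γ (fun α => S (x α)) (S L) ⟨‖S‖ * C, fun α => S.le_of_opNorm_le_of_le le_rfl (hC α)⟩
      fun φ => hx (φ.comp S)
end
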